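/- There exist constants C > 0, b > 0 and X₀ such that for every nonzero integer k divisible by 4 and every real X ≥ X₀ satisfying log|k| ≤ b·√(log X), one has (1/X) · Σ_{1 ≤ m ≤ X} |S(m,k)| ≤ C · ((log|k|)² / log X)^{1 − 2/π}. In other words, lattice points on circles are equidistributed on average: log((1/X) Σ_{m ≤ X} |S(m,k)|) ≤ C − (1 − 2/π)·log( log X / (log|k|)² ). -/

import Mathlib

/-- The set of lattice points `(x, y) ∈ ℤ²` with `x² + y² = n`. -/
noncomputable def latticeCircle (n : ℕ) : Finset (ℤ × ℤ) :=
  (Finset.Icc (-(n : ℤ)) (n : ℤ) ×ˢ Finset.Icc (-(n : ℤ)) (n : ℤ)).filter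
    (fun p => p.1 ^ 2 + p.2 ^ 2 = (n : ℤ))

/-- `r n` is the number of lattice points on the circle of squared radius `n`. -/
noncomputable def latticeR (n : ℕ) : ℕ := (latticeCircle n).card

/-- The angle `θ_u ∈ [0, 2π)` of a lattice point `u`. -/
noncomputable def latticeTheta (u : ℤ × ℤ) : ℝ :=
  if 0 ≤ Complex.arg ((u.1 : ℂ) + (u.2 : ℂ) * Complex.I)
  then Complex.arg ((u.1 : ℂ) + (u.2 : ℂ) * Complex.I)
  else Complex.arg ((u.1 : ℂ) + (u.2 : ℂ) * Complex.I) + 2 * Real.pi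

/-- The exponential sum `S(m, k) = Σ_{u ∈ ℤ², |u|² = m} exp(i k θ_u)`. -/
noncomputable def latticeS (m : ℕ) (k : ℤ) : ℂ :=
  ∑ u ∈ latticeCircle m, Complex.exp ((k : ℂ) * (latticeTheta u : ℂ) * Complex.I)

/-!
Since `ℤ[i]` has unique factorisation and four units, `g(n) = |S(n, k)| / 4` is multiplicative when
`4 ∣ k`, with `g(p ^ e) ≤ e + 1` and `g(p) = 2 |cos kθ|` for a prime `p` that splits as the norm of
a Gaussian prime of argument `θ`. For such `g`, the elementary mean value bound of Hall and
Tenenbaum combined with Rankin's trick gives `∑_{n ≤ X} g(n) ≪ (X / log X) ∑ g(n) n ^ (-σ)` with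
`σ = 1 + 1 / log X`, so it remains to bound `∑ g(p) p ^ (-σ)` over primes.

The Fourier series of `|cos|` has mean `2/π`, and its remaining terms turn the sum over primes into
logarithms of the Hecke `L`-functions `L(s, 2jk)`, `j ≠ 0`, at `s = σ`. These continue past the line
`re s = 1`, and the inequality `3 + 4 cos φ + cos 2φ ≥ 0` yields a zero-free region of width
`≫ 1 / log |k|`, in which Borel–Carathéodory makes `log |L|` vary by only `O(1)` on
`1 < s ≤ 1 + a / (log |k|)²`. Hence `g(p)` averages `2/π` times its trivial bound over primes with
`log p` between `(log |k|)²` and `log X`, whence the saving `((log |k|)² / log X) ^ (1 - 2/π)`.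
-/

namespace LatticePoint

open Filter Topology

/-! ### Angular characters and lattice circles -/

section AngularChar

/-- The angular character `z ↦ (z / |z|) ^ k` of the punctured plane. Its value at `0` is the junk
value `0 ^ k`. -/
noncomputable def angularChar (k : ℤ) (z : ℂ) : ℂ := (z / ‖z‖) ^ k

variable (k : ℤ) {z : ℂ}

lemma angularChar_mul (z w : ℂ) : angularChar k (z * w) = angularChar k z * angularChar k w := by
  simp only [angularChar]
  rw [norm_mul, ← mul_zpow, div_mul_div_comm, Complex.ofReal_mul]

@[simp]
lemma angularChar_zero_left (z : ℂ) : angularChar 0 z = 1 := zpow_zero _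

lemma norm_div_norm_self (hz : z ≠ 0) : ‖z / ‖z‖‖ = 1 := by
  rw [norm_div, Complex.norm_real, norm_norm, div_self (norm_ne_zero_iff.mpr hz)]

lemma norm_angularChar (hz : z ≠ 0) : ‖angularChar k z‖ = 1 := by
  rw [angularChar, norm_zpow, norm_div_norm_self hz, one_zpow]

lemma norm_angularChar_le_one (z : ℂ) : ‖angularChar k z‖ ≤ 1 := by
  rcases eq_or_ne z 0 with rfl | hz
  · rcases eq_or_ne k 0 with rfl | hk
    · simp
    · simp [angularChar, zero_zpow k hk]
  · exact (norm_angularChar k hz).le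

lemma angularChar_natCast {n : ℕ} (hn : n ≠ 0) : angularChar k n = 1 := by
  simp [angularChar, hn]

lemma angularChar_conj (z : ℂ) :
    angularChar k (starRingEnd ℂ z) = starRingEnd ℂ (angularChar k z) := by
  simp [angularChar]

lemma angularChar_eq_exp (hz : z ≠ 0) :
    angularChar k z = Complex.exp ((k * z.arg : ℝ) * Complex.I) := by
  push_cast
  rw [angularChar, mul_assoc, Complex.exp_int_mul]
  congr 1
  rw [div_eq_iff (by simpa using hz), mul_comm, Complex.norm_mul_exp_arg_mul_I]

lemma angularChar_add_conj (hz : z ≠ 0) :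
    angularChar k z + angularChar k (starRingEnd ℂ z) = ((2 * Real.cos (k * z.arg) : ℝ) : ℂ) := by
  rw [angularChar_conj, Complex.add_conj, angularChar_eq_exp k hz, Complex.exp_ofReal_mul_I_re]

end AngularChar

section GaussianCircle

/-- The Gaussian integers of norm `n`: the lattice circle seen inside the ring `ℤ[i]`, whose
arithmetic governs the exponential sums. -/
noncomputable def gaussianCircle (n : ℕ) : Finset GaussianInt :=
  (latticeCircle n).image fun x => ⟨x.1, x.2⟩

variable {m n : ℕ} {u v : GaussianInt}

@[simp]
lemma mem_gaussianCircle : u ∈ gaussianCircle n ↔ u.norm = n := by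
  simp only [gaussianCircle, latticeCircle, Finset.mem_image, Finset.mem_filter,
    Finset.mem_product, Finset.mem_Icc, Prod.exists, Zsqrtd.norm_def]
  constructor
  · rintro ⟨x, y, ⟨-, h⟩, rfl⟩
    linear_combination h
  · intro h
    refine ⟨u.re, u.im, ⟨⟨⟨?_, ?_⟩, ?_, ?_⟩, by linear_combination h⟩, rfl⟩
    · nlinarith [sq_nonneg u.im, Int.le_self_sq (-u.re)]
    · nlinarith [sq_nonneg u.im, Int.le_self_sq u.re]
    · nlinarith [sq_nonneg u.re, Int.le_self_sq (-u.im)]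
    · nlinarith [sq_nonneg u.re, Int.le_self_sq u.im]

lemma ne_zero_of_mem_gaussianCircle (hn : n ≠ 0) (hu : u ∈ gaussianCircle n) : u ≠ 0 := by
  rintro rfl
  rw [mem_gaussianCircle, Zsqrtd.norm_zero] at hu
  exact hn (by exact_mod_cast hu.symm)

lemma mul_star_of_mem_gaussianCircle (hu : u ∈ gaussianCircle n) : u * star u = n := by
  rw [← Zsqrtd.norm_eq_mul_conj, mem_gaussianCircle.mp hu, Int.cast_natCast]

lemma mul_mem_gaussianCircle (hu : u ∈ gaussianCircle m) (hv : v ∈ gaussianCircle n) :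
    u * v ∈ gaussianCircle (m * n) := by
  rw [mem_gaussianCircle] at *
  rw [Zsqrtd.norm_mul, hu, hv, Nat.cast_mul]

lemma star_mem_gaussianCircle (hu : u ∈ gaussianCircle n) : star u ∈ gaussianCircle n := by
  rwa [mem_gaussianCircle, Zsqrtd.norm_conj, ← mem_gaussianCircle]

lemma mem_gaussianCircle_of_mul_mem (hm : m ≠ 0) (hu : u ∈ gaussianCircle m)
    (huv : u * v ∈ gaussianCircle (m * n)) : v ∈ gaussianCircle n := by
  rw [mem_gaussianCircle] at *
  rw [Zsqrtd.norm_mul, hu, Nat.cast_mul] at huv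
  exact mul_left_cancel₀ (by exact_mod_cast hm) huv

lemma gaussianCircle_one : gaussianCircle 1 = {1, -1, ⟨0, 1⟩, ⟨0, -1⟩} := by
  ext u
  simp only [mem_gaussianCircle, Finset.mem_insert, Finset.mem_singleton, Zsqrtd.ext_iff,
    Zsqrtd.norm_def]
  constructor
  · intro h
    push_cast at h
    have h₁ : u.re ≤ 1 := by nlinarith [sq_nonneg u.im, Int.le_self_sq u.re]
    have h₂ : -1 ≤ u.re := by nlinarith [sq_nonneg u.im, Int.le_self_sq (-u.re)]
    have h₃ : u.im ≤ 1 := by nlinarith [sq_nonneg u.re, Int.le_self_sq u.im]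
    have h₄ : -1 ≤ u.im := by nlinarith [sq_nonneg u.re, Int.le_self_sq (-u.im)]
    interval_cases u.re <;> interval_cases u.im <;> simp_all
  · rintro (h | h | h | h) <;> simp [h]

lemma card_gaussianCircle_one : (gaussianCircle 1).card = 4 := by rw [gaussianCircle_one]; decide

lemma angularChar_of_mem_gaussianCircle_one {k : ℤ} (hk : 4 ∣ k) (hu : u ∈ gaussianCircle 1) :
    angularChar k u = 1 := by
  obtain ⟨j, rfl⟩ := hk
  rw [gaussianCircle_one] at hu
  simp only [Finset.mem_insert, Finset.mem_singleton] at hu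
  rw [angularChar, zpow_mul, show (4 : ℤ) = ((4 : ℕ) : ℤ) from rfl, zpow_natCast]
  rcases hu with rfl | rfl | rfl | rfl <;>
    simp [GaussianInt.toComplex_def, Even.neg_pow (show Even 4 by decide)]

end GaussianCircle

/-! ### The multiplicative coefficients -/

section AngularCoeff

/-- The coefficient `S(n, k) / 4`, normalised so as to be multiplicative in `n` when `4 ∣ k`. -/
noncomputable def angularCoeff (k : ℤ) (n : ℕ) : ℂ :=
  (∑ u ∈ gaussianCircle n, angularChar k u) / 4

variable {m n : ℕ} {k : ℤ}

lemma exp_mul_latticeTheta (k : ℤ) {x : ℤ × ℤ} (hx : (⟨x.1, x.2⟩ : GaussianInt) ≠ 0) :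
    Complex.exp (k * latticeTheta x * Complex.I) =
      angularChar k ((⟨x.1, x.2⟩ : GaussianInt) : ℂ) := by
  have hθ : Complex.exp (latticeTheta x * Complex.I) =
      Complex.exp (Complex.arg (x.1 + x.2 * Complex.I) * Complex.I) := by
    unfold latticeTheta
    split_ifs
    · rfl
    · push_cast
      rw [add_mul, Complex.exp_add, Complex.exp_two_pi_mul_I, mul_one]
  rw [angularChar_eq_exp k (by simpa only [ne_eq, GaussianInt.toComplex_eq_zero] using hx),
    GaussianInt.toComplex_def', mul_assoc, Complex.exp_int_mul, hθ, ← Complex.exp_int_mul]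
  push_cast
  rw [mul_assoc]

lemma latticeS_eq_four_mul_angularCoeff (hn : n ≠ 0) (k : ℤ) :
    latticeS n k = 4 * angularCoeff k n := by
  rw [angularCoeff, mul_div_cancel₀ _ (by norm_num : (4 : ℂ) ≠ 0), latticeS, gaussianCircle,
    Finset.sum_image]
  · exact Finset.sum_congr rfl fun x hx => exp_mul_latticeTheta k
      (ne_zero_of_mem_gaussianCircle hn (Finset.mem_image_of_mem _ hx))
  · intro x _ y _ hxy
    simp only [Zsqrtd.mk.injEq] at hxy
    exact Prod.ext hxy.1 hxy.2

lemma angularCoeff_zero_left (n : ℕ) :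
    angularCoeff 0 n = (((gaussianCircle n).card / 4 : ℝ) : ℂ) := by
  simp [angularCoeff]

lemma norm_angularCoeff_le (k : ℤ) (n : ℕ) : ‖angularCoeff k n‖ ≤ (angularCoeff 0 n).re := by
  rw [angularCoeff_zero_left, Complex.ofReal_re, angularCoeff, norm_div, RCLike.norm_ofNat]
  gcongr
  simpa using norm_sum_le_of_le (gaussianCircle n) fun u _ => norm_angularChar_le_one k (u : ℂ)

lemma angularCoeff_one (hk : 4 ∣ k) : angularCoeff k 1 = 1 := by
  rw [angularCoeff, Finset.sum_congr rfl fun u hu => angularChar_of_mem_gaussianCircle_one hk hu]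
  simp [card_gaussianCircle_one]

lemma natAbs_norm_dvd_sq {u : GaussianInt} (hu : u ∣ (n : GaussianInt)) :
    u.norm.natAbs ∣ n * n := by
  obtain ⟨c, hc⟩ := hu
  have h : u.norm * c.norm = ((n * n : ℕ) : ℤ) := by
    rw [← Zsqrtd.norm_mul, ← hc, Zsqrtd.norm_natCast, Nat.cast_mul]
  exact Int.natCast_dvd_natCast.mp (Int.natAbs_dvd.mpr ⟨_, h.symm⟩)

lemma mem_gaussianCircle_of_dvd_of_coprime (hmn : m.Coprime n) {u v : GaussianInt}
    (hu : u ∣ (m : GaussianInt)) (hv : v ∣ (n : GaussianInt))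
    (huv : u * v ∈ gaussianCircle (m * n)) : u ∈ gaussianCircle m ∧ v ∈ gaussianCircle n := by
  have hnorm (w : GaussianInt) : w.norm = w.norm.natAbs :=
    (Int.natAbs_of_nonneg (GaussianInt.norm_nonneg w)).symm
  have hun : u.norm.natAbs.Coprime n := (hmn.mul_left hmn).coprime_dvd_left (natAbs_norm_dvd_sq hu)
  have hvm : v.norm.natAbs.Coprime m :=
    (hmn.symm.mul_left hmn.symm).coprime_dvd_left (natAbs_norm_dvd_sq hv)
  have h : u.norm.natAbs * v.norm.natAbs = m * n := by
    rw [mem_gaussianCircle, Zsqrtd.norm_mul, hnorm u, hnorm v] at huv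
    exact_mod_cast huv
  rw [mem_gaussianCircle, mem_gaussianCircle, hnorm u, hnorm v, Nat.cast_inj, Nat.cast_inj]
  exact ⟨Nat.dvd_antisymm (hun.dvd_of_dvd_mul_right ⟨_, h.symm⟩)
      (hvm.symm.dvd_of_dvd_mul_right ⟨n, h⟩),
    Nat.dvd_antisymm (hvm.dvd_of_dvd_mul_left ⟨_, h.symm.trans (mul_comm _ _)⟩)
      (hun.symm.dvd_of_dvd_mul_left ⟨m, h.trans (mul_comm _ _)⟩)⟩

lemma isCoprime_of_mem_gaussianCircle (hmn : m.Coprime n) {u v : GaussianInt}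
    (hu : u ∈ gaussianCircle m) (hv : v ∈ gaussianCircle n) : IsCoprime u v := by
  have h : IsCoprime (m : GaussianInt) (n : GaussianInt) := by
    simpa using (Nat.isCoprime_iff_coprime.mpr hmn).map (Int.castRingHom GaussianInt)
  rw [← mul_star_of_mem_gaussianCircle hu, ← mul_star_of_mem_gaussianCircle hv] at h
  exact h.of_mul_left_left.of_mul_right_left

/-- The factorisations form a torsor under the four units. -/
lemma card_filter_mul_eq (hm : m ≠ 0) (hmn : m.Coprime n) {w : GaussianInt}
    (hw : w ∈ gaussianCircle (m * n)) :
    ((gaussianCircle m ×ˢ gaussianCircle n).filter fun x => x.1 * x.2 = w).card = 4 := by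
  have hdvd : w ∣ (m : GaussianInt) * n :=
    ⟨star w, by rw [mul_star_of_mem_gaussianCircle hw, Nat.cast_mul]⟩
  obtain ⟨u, v, hu, hv, rfl⟩ := exists_dvd_and_dvd_of_dvd_mul hdvd
  obtain ⟨hu, hv⟩ := mem_gaussianCircle_of_dvd_of_coprime hmn hu hv hw
  have hu₀ := ne_zero_of_mem_gaussianCircle hm hu
  have hunit {e : GaussianInt} (he : e ∈ gaussianCircle 1) : e * star e = 1 := by
    simpa using mul_star_of_mem_gaussianCircle he
  rw [← card_gaussianCircle_one]
  symm
  refine Finset.card_bij (fun e _ => (u * e, v * star e)) (fun e he => ?_)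
    (fun e _ e' _ h => mul_left_cancel₀ hu₀ (congrArg Prod.fst h)) ?_
  · simp only [Finset.mem_filter, Finset.mem_product]
    refine ⟨⟨by simpa using mul_mem_gaussianCircle hu he,
      by simpa using mul_mem_gaussianCircle hv (star_mem_gaussianCircle he)⟩, ?_⟩
    linear_combination u * v * hunit he
  · rintro ⟨u', v'⟩ h
    simp only [Finset.mem_filter, Finset.mem_product] at h
    obtain ⟨⟨hu', hv'⟩, h⟩ := h
    obtain ⟨e, rfl⟩ : u ∣ u' := (isCoprime_of_mem_gaussianCircle hmn hu hv').dvd_of_dvd_mul_right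
      (by rw [h]; exact dvd_mul_right _ _)
    have he : e ∈ gaussianCircle 1 :=
      mem_gaussianCircle_of_mul_mem hm hu (by rwa [mul_one])
    have hv_eq : e * v' = v := mul_left_cancel₀ hu₀ (by rw [← h, mul_assoc])
    refine ⟨e, he, Prod.ext rfl ?_⟩
    rw [← hv_eq]
    linear_combination v' * hunit he

lemma angularCoeff_mul (hk : 4 ∣ k) (hmn : m.Coprime n) :
    angularCoeff k (m * n) = angularCoeff k m * angularCoeff k n := by
  rcases eq_or_ne m 0 with rfl | hm
  · rw [Nat.coprime_zero_left] at hmn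
    rw [hmn, mul_one, angularCoeff_one hk, mul_one]
  have hsum : (∑ u ∈ gaussianCircle m, angularChar k u) * ∑ v ∈ gaussianCircle n, angularChar k v =
      4 * ∑ w ∈ gaussianCircle (m * n), angularChar k w := by
    rw [Finset.sum_mul_sum, ← Finset.sum_product', Finset.mul_sum,
      ← Finset.sum_fiberwise_of_maps_to (t := gaussianCircle (m * n)) (g := fun x => x.1 * x.2)]
    · refine Finset.sum_congr rfl fun w hw => ?_
      rw [Finset.sum_congr rfl (g := fun _ => angularChar k w), Finset.sum_const,
        card_filter_mul_eq hm hmn hw, nsmul_eq_mul, Nat.cast_ofNat]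
      intro x hx
      rw [← (Finset.mem_filter.mp hx).2, GaussianInt.toComplex_mul, angularChar_mul]
    · intro x hx
      rw [Finset.mem_product] at hx
      exact mul_mem_gaussianCircle hx.1 hx.2
  rw [angularCoeff, angularCoeff, angularCoeff, div_mul_div_comm, hsum,
    mul_div_mul_left _ _ (by norm_num : (4 : ℂ) ≠ 0)]

end AngularCoeff

/-! ### Coefficients at prime powers -/

section PrimePower

variable {p n : ℕ} {q u v : GaussianInt} {k : ℤ}

lemma prime_of_mem_gaussianCircle (hp : p.Prime) (hq : q ∈ gaussianCircle p) : Prime q := by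
  have hnat (x : GaussianInt) : IsUnit x ↔ x.norm.natAbs = 1 := Zsqrtd.norm_eq_one_iff.symm
  have hqp : q.norm.natAbs = p := by rw [mem_gaussianCircle.mp hq, Int.natAbs_natCast]
  rw [← irreducible_iff_prime]
  refine ⟨fun h => hp.one_lt.ne' (hqp ▸ (hnat q).mp h), fun x y hxy => ?_⟩
  rw [hnat, hnat]
  rw [hxy, Zsqrtd.norm_mul, Int.natAbs_mul] at hqp
  rcases Nat.prime_mul_iff.mp (hqp ▸ hp) with h | h
  · exact Or.inr h.2
  · exact Or.inl h.2

lemma dvd_or_star_dvd (hq : Prime q) (hu : u ∈ gaussianCircle n) (h : q ∣ (n : GaussianInt)) :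
    q ∣ u ∨ star q ∣ u := by
  rw [← mul_star_of_mem_gaussianCircle hu] at h
  refine (hq.dvd_or_dvd h).imp_right fun hqu => ?_
  simpa only [starRingEnd_apply, star_star] using map_dvd (starRingEnd GaussianInt) hqu

lemma sum_image_mul_angularChar (k : ℤ) (hq : q ≠ 0) (s : Finset GaussianInt) :
    ∑ u ∈ s.image (q * ·), angularChar k u = angularChar k q * ∑ u ∈ s, angularChar k u := by
  rw [Finset.sum_image (mul_right_injective₀ hq).injOn, Finset.mul_sum]
  simp only [GaussianInt.toComplex_mul, angularChar_mul]

lemma gaussianCircle_prime_mul (hp : p.Prime) (hq : q ∈ gaussianCircle p) (n : ℕ) :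
    gaussianCircle (p * n) =
      (gaussianCircle n).image (q * ·) ∪ (gaussianCircle n).image (star q * ·) := by
  ext u
  simp only [Finset.mem_union, Finset.mem_image]
  constructor
  · intro hu
    have hqpn : q ∣ ((p * n : ℕ) : GaussianInt) := by
      rw [Nat.cast_mul, ← mul_star_of_mem_gaussianCircle hq, mul_assoc]
      exact dvd_mul_right _ _
    rcases dvd_or_star_dvd (prime_of_mem_gaussianCircle hp hq) hu hqpn with ⟨v, rfl⟩ | ⟨v, rfl⟩
    · exact Or.inl ⟨v, mem_gaussianCircle_of_mul_mem hp.ne_zero hq hu, rfl⟩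
    · exact Or.inr
        ⟨v, mem_gaussianCircle_of_mul_mem hp.ne_zero (star_mem_gaussianCircle hq) hu, rfl⟩
  · rintro (⟨v, hv, rfl⟩ | ⟨v, hv, rfl⟩)
    · exact mul_mem_gaussianCircle hq hv
    · exact mul_mem_gaussianCircle (star_mem_gaussianCircle hq) hv

lemma image_mul_inter_image_star_mul (hp : p.Prime) (hq : q ∈ gaussianCircle p)
    (hqq : ¬ q ∣ star q) (n : ℕ) :
    (gaussianCircle (p * n)).image (q * ·) ∩ (gaussianCircle (p * n)).image (star q * ·) =
      (gaussianCircle n).image ((p : GaussianInt) * ·) := by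
  have hsq := star_mem_gaussianCircle hq
  ext u
  simp only [Finset.mem_inter, Finset.mem_image, ← mul_star_of_mem_gaussianCircle hq]
  constructor
  · rintro ⟨⟨v, hv, rfl⟩, w, -, hw⟩
    obtain ⟨t, rfl⟩ : q ∣ w := ((prime_of_mem_gaussianCircle hp hq).dvd_or_dvd
      (hw ▸ dvd_mul_right q v)).resolve_left hqq
    have hvt : v = star q * t :=
      mul_left_cancel₀ (ne_zero_of_mem_gaussianCircle hp.ne_zero hq) (by rw [← hw]; ring)
    exact ⟨t, mem_gaussianCircle_of_mul_mem hp.ne_zero hsq (hvt ▸ hv), by rw [hvt, mul_assoc]⟩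
  · rintro ⟨t, ht, rfl⟩
    exact ⟨⟨star q * t, mul_mem_gaussianCircle hsq ht, by ring⟩,
      ⟨q * t, mul_mem_gaussianCircle hq ht, by ring⟩⟩

lemma image_mul_inter_image_star_mul_one (hqq : ¬ q ∣ star q) :
    (gaussianCircle 1).image (q * ·) ∩ (gaussianCircle 1).image (star q * ·) = ∅ := by
  rw [Finset.eq_empty_iff_forall_notMem]
  intro u hu
  simp only [Finset.mem_inter, Finset.mem_image] at hu
  obtain ⟨⟨v, -, hv⟩, ⟨w, hw, hw'⟩⟩ := hu
  have hunit : w * star w = 1 := by simpa using mul_star_of_mem_gaussianCircle hw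
  exact hqq ⟨v * star w, by linear_combination (-star q) * hunit + star w * (hw' - hv)⟩

lemma angularCoeff_prime_of_split (hk : 4 ∣ k) (hp : p.Prime) (hq : q ∈ gaussianCircle p)
    (hqq : ¬ q ∣ star q) :
    angularCoeff k p = angularChar k q + angularChar k ((star q : GaussianInt) : ℂ) := by
  have h := Finset.sum_union_inter (s₁ := (gaussianCircle 1).image (q * ·))
    (s₂ := (gaussianCircle 1).image (star q * ·)) (f := fun u => angularChar k u)
  rw [← gaussianCircle_prime_mul hp hq, image_mul_inter_image_star_mul_one hqq,
    sum_image_mul_angularChar k (ne_zero_of_mem_gaussianCircle hp.ne_zero hq),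
    sum_image_mul_angularChar k
      (ne_zero_of_mem_gaussianCircle hp.ne_zero (star_mem_gaussianCircle hq)),
    Finset.sum_empty, add_zero, mul_one] at h
  rw [angularCoeff, h, ← add_mul, mul_div_assoc, ← angularCoeff, angularCoeff_one hk, mul_one]

lemma angularCoeff_prime_pow_of_split (hk : 4 ∣ k) (hp : p.Prime) (hq : q ∈ gaussianCircle p)
    (hqq : ¬ q ∣ star q) (e : ℕ) :
    angularCoeff k (p ^ (e + 2)) =
      angularCoeff k p * angularCoeff k (p ^ (e + 1)) - angularCoeff k (p ^ e) := by
  have h := Finset.sum_union_inter (s₁ := (gaussianCircle (p * p ^ e)).image (q * ·))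
    (s₂ := (gaussianCircle (p * p ^ e)).image (star q * ·)) (f := fun u => angularChar k u)
  rw [← gaussianCircle_prime_mul hp hq, image_mul_inter_image_star_mul hp hq hqq,
    sum_image_mul_angularChar k (ne_zero_of_mem_gaussianCircle hp.ne_zero hq),
    sum_image_mul_angularChar k
      (ne_zero_of_mem_gaussianCircle hp.ne_zero (star_mem_gaussianCircle hq)),
    sum_image_mul_angularChar k (Nat.cast_ne_zero.mpr hp.ne_zero), map_natCast,
    angularChar_natCast k hp.ne_zero] at h
  rw [angularCoeff_prime_of_split hk hp hq hqq, pow_succ' p (e + 1), pow_succ' p e, angularCoeff,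
    angularCoeff, angularCoeff]
  linear_combination (1 / 4 : ℂ) * h

lemma angularCoeff_prime_mul_of_dvd_star (k : ℤ) (hp : p.Prime) (hq : q ∈ gaussianCircle p)
    (hqq : q ∣ star q) (n : ℕ) :
    angularCoeff k (p * n) = angularChar k q * angularCoeff k n := by
  have hsub : (gaussianCircle n).image (star q * ·) ⊆ (gaussianCircle n).image (q * ·) := by
    rintro _ hu
    obtain ⟨v, hv, rfl⟩ := Finset.mem_image.mp hu
    obtain ⟨e, he⟩ := hqq
    have hmem : q * (e * v) ∈ gaussianCircle (p * n) := by
      rw [← mul_assoc, ← he]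
      exact mul_mem_gaussianCircle (star_mem_gaussianCircle hq) hv
    exact Finset.mem_image.mpr
      ⟨e * v, mem_gaussianCircle_of_mul_mem hp.ne_zero hq hmem, by rw [he, mul_assoc]⟩
  rw [angularCoeff, gaussianCircle_prime_mul hp hq, Finset.union_eq_left.mpr hsub,
    sum_image_mul_angularChar k (ne_zero_of_mem_gaussianCircle hp.ne_zero hq), mul_div_assoc,
    angularCoeff]

lemma natCast_dvd_of_mem_gaussianCircle (hp : Prime (p : GaussianInt)) (hpn : p ∣ n)
    (hu : u ∈ gaussianCircle n) : (p : GaussianInt) ∣ u := by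
  rcases dvd_or_star_dvd hp hu (Nat.cast_dvd_cast hpn) with h | h
  · exact h
  · rwa [star_natCast] at h

lemma angularCoeff_prime_of_inert (k : ℤ) (hp : Prime (p : GaussianInt)) :
    angularCoeff k p = 0 := by
  suffices h : gaussianCircle p = ∅ by rw [angularCoeff, h, Finset.sum_empty, zero_div]
  rw [Finset.eq_empty_iff_forall_notMem]
  intro u hu
  obtain ⟨v, rfl⟩ := natCast_dvd_of_mem_gaussianCircle hp dvd_rfl hu
  rw [mem_gaussianCircle, Zsqrtd.norm_mul, Zsqrtd.norm_natCast, mul_assoc] at hu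
  have hp₀ : (p : ℤ) ≠ 0 := by exact_mod_cast hp.ne_zero
  have hunit : IsUnit (p : ℤ) :=
    IsUnit.of_mul_eq_one v.norm (mul_left_cancel₀ hp₀ (by rw [hu, mul_one]))
  exact hp.not_isUnit (by simpa using hunit.map (Int.castRingHom GaussianInt))

lemma angularCoeff_sq_mul_of_inert (k : ℤ) (hp : Prime (p : GaussianInt)) (n : ℕ) :
    angularCoeff k (p * p * n) = angularCoeff k n := by
  have hp₀ : p ≠ 0 := by exact_mod_cast hp.ne_zero
  have hpp : (p : GaussianInt) ∈ gaussianCircle (p * p) := by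
    rw [mem_gaussianCircle, Zsqrtd.norm_natCast, Nat.cast_mul]
  have himage : gaussianCircle (p * p * n) =
      (gaussianCircle n).image ((p : GaussianInt) * ·) := by
    ext u
    simp only [Finset.mem_image]
    constructor
    · intro hu
      obtain ⟨v, rfl⟩ := natCast_dvd_of_mem_gaussianCircle hp
        (mul_assoc p p n ▸ dvd_mul_right _ _) hu
      exact ⟨v, mem_gaussianCircle_of_mul_mem (mul_ne_zero hp₀ hp₀) hpp hu, rfl⟩
    · rintro ⟨v, hv, rfl⟩
      exact mul_mem_gaussianCircle hpp hv
  rw [angularCoeff, himage, sum_image_mul_angularChar k hp.ne_zero, map_natCast,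
    angularChar_natCast k hp₀, one_mul, angularCoeff]

lemma exists_mem_gaussianCircle_prime (hp : p.Prime) (hp4 : p % 4 ≠ 3) :
    ∃ q, q ∈ gaussianCircle p := by
  have : Fact p.Prime := ⟨hp⟩
  obtain ⟨x, y, hxy⟩ := Nat.Prime.sq_add_sq hp4
  refine ⟨⟨x, y⟩, ?_⟩
  rw [mem_gaussianCircle, Zsqrtd.norm_def, ← hxy]
  push_cast
  ring

lemma not_dvd_star_of_odd (hp : p.Prime) (hp2 : p ≠ 2) (hq : q ∈ gaussianCircle p) :
    ¬ q ∣ star q := by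
  intro h
  have hpZ : Prime (p : ℤ) := Nat.prime_iff_prime_int.mp hp
  have hnorm : q.re ^ 2 + q.im ^ 2 = p := by
    rw [← mem_gaussianCircle.mp hq, Zsqrtd.norm_def]
    ring
  have hdvd : (p : ℤ) ∣ 2 * q.re := by
    obtain ⟨c, hc⟩ : q ∣ ((2 * q.re : ℤ) : GaussianInt) := by
      have htrace : ((2 * q.re : ℤ) : GaussianInt) = q + star q := by ext <;> simp [two_mul]
      exact htrace ▸ dvd_add dvd_rfl h
    have hsq : (p : ℤ) ∣ (2 * q.re) * (2 * q.re) := by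
      rw [← Zsqrtd.norm_intCast (d := -1), hc, Zsqrtd.norm_mul, mem_gaussianCircle.mp hq]
      exact dvd_mul_right _ _
    exact (or_self _).mp (hpZ.dvd_mul.mp hsq)
  have hre : (p : ℤ) ∣ q.re := (hpZ.dvd_mul.mp hdvd).resolve_left fun h2 => hp2 <|
    (Nat.prime_dvd_prime_iff_eq hp Nat.prime_two).mp (Int.natCast_dvd_natCast.mp h2)
  have him : (p : ℤ) ∣ q.im := hpZ.dvd_of_dvd_pow (n := 2)
    ((dvd_add_right (hre.trans (dvd_pow_self _ two_ne_zero))).mp (hnorm ▸ dvd_rfl))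
  have hpp : (p : ℤ) * p ∣ p * 1 := by
    rw [mul_one, ← sq]
    nth_rewrite 2 [← hnorm]
    exact dvd_add (pow_dvd_pow_of_dvd hre 2) (pow_dvd_pow_of_dvd him 2)
  exact hpZ.not_dvd_one ((mul_dvd_mul_iff_left hpZ.ne_zero).mp hpp)

lemma dvd_star_of_mem_gaussianCircle_two (hq : q ∈ gaussianCircle 2) : q ∣ star q := by
  have htrace : q + star q = ((2 : ℕ) : GaussianInt) * q.re := by ext <;> simp [two_mul]
  rw [← mul_star_of_mem_gaussianCircle hq, mul_assoc] at htrace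
  exact (dvd_add_right dvd_rfl).mp (htrace ▸ dvd_mul_right _ _)

/-- `θ` is an angle for `p`: together with `χ₄ p` it determines all coefficients at powers of `p`,
through the recursion of Chebyshev polynomials. For primes that are not inert, the argument of a
Gaussian prime above `p` is such an angle. -/
def IsPrimeAngle (p : ℕ) (θ : ℝ) : Prop :=
  ∀ k : ℤ, 4 ∣ k →
    angularCoeff k p = (((1 + ZMod.χ₄ p : ℤ) * Real.cos (k * θ) : ℝ) : ℂ) ∧
    ∀ e : ℕ, angularCoeff k (p ^ (e + 2)) = angularCoeff k p * angularCoeff k (p ^ (e + 1)) -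
      (ZMod.χ₄ p : ℤ) * angularCoeff k (p ^ e)

lemma angularChar_add_star (k : ℤ) (hq : q ≠ 0) :
    angularChar k q + angularChar k ((star q : GaussianInt) : ℂ) =
      ((2 * Real.cos (k * Complex.arg q) : ℝ) : ℂ) := by
  rw [GaussianInt.toComplex_star, angularChar_add_conj k
    (by simpa only [ne_eq, GaussianInt.toComplex_eq_zero] using hq)]

lemma isPrimeAngle_two (hq : q ∈ gaussianCircle 2) : IsPrimeAngle 2 (Complex.arg q) := by
  have htwo {q : GaussianInt} (hq : q ∈ gaussianCircle 2) {k : ℤ} (hk : 4 ∣ k) :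
      angularCoeff k 2 = angularChar k q := by
    simpa [angularCoeff_one hk] using angularCoeff_prime_mul_of_dvd_star k Nat.prime_two hq
      (dvd_star_of_mem_gaussianCircle_two hq) 1
  have hχ : ZMod.χ₄ (2 : ℕ) = 0 := rfl
  refine fun k hk => ⟨?_, fun e => ?_⟩
  · have h := angularChar_add_star k (ne_zero_of_mem_gaussianCircle two_ne_zero hq)
    rw [← htwo hq hk, ← htwo (star_mem_gaussianCircle hq) hk] at h
    rw [hχ]
    push_cast at h ⊢
    linear_combination h / 2
  · rw [pow_succ' 2 (e + 1), angularCoeff_prime_mul_of_dvd_star k Nat.prime_two hq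
      (dvd_star_of_mem_gaussianCircle_two hq), htwo hq hk, hχ, Int.cast_zero, zero_mul, sub_zero]

lemma isPrimeAngle_of_split (hp : p.Prime) (hp4 : p % 4 = 1) (hq : q ∈ gaussianCircle p) :
    IsPrimeAngle p (Complex.arg q) := by
  have hqq := not_dvd_star_of_odd hp (by omega) hq
  refine fun k hk => ⟨?_, fun e => ?_⟩
  · rw [angularCoeff_prime_of_split hk hp hq hqq,
      angularChar_add_star k (ne_zero_of_mem_gaussianCircle hp.ne_zero hq),
      ZMod.χ₄_nat_one_mod_four hp4]
    norm_num
  · rw [angularCoeff_prime_pow_of_split hk hp hq hqq, ZMod.χ₄_nat_one_mod_four hp4, Int.cast_one,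
      one_mul]

lemma isPrimeAngle_of_inert (hp : p.Prime) (hp4 : p % 4 = 3) (θ : ℝ) : IsPrimeAngle p θ := by
  have : Fact p.Prime := ⟨hp⟩
  have hprime := GaussianInt.prime_of_nat_prime_of_mod_four_eq_three p hp4
  refine fun k _ => ⟨?_, fun e => ?_⟩
  · rw [angularCoeff_prime_of_inert k hprime, ZMod.χ₄_nat_three_mod_four hp4]
    norm_num
  · rw [angularCoeff_prime_of_inert k hprime, ZMod.χ₄_nat_three_mod_four hp4,
      show p ^ (e + 2) = p * p * p ^ e by ring, angularCoeff_sq_mul_of_inert k hprime]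
    push_cast
    ring

lemma exists_isPrimeAngle (hp : p.Prime) : ∃ θ, IsPrimeAngle p θ := by
  by_cases hp4 : p % 4 = 3
  · exact ⟨0, isPrimeAngle_of_inert hp hp4 0⟩
  obtain ⟨q, hq⟩ := exists_mem_gaussianCircle_prime hp hp4
  rcases hp.eq_two_or_odd with rfl | hodd
  · exact ⟨_, isPrimeAngle_two hq⟩
  · exact ⟨_, isPrimeAngle_of_split hp (by omega) hq⟩

end PrimePower

section PrimeCoeff

variable {k : ℤ} (p : Nat.Primes)

/-- An angle for the prime `p`. -/
noncomputable def primeAngle : ℝ := (exists_isPrimeAngle p.2).choose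

/-- The real number `angularCoeff k p`, for `4 ∣ k`. -/
noncomputable def primeCoeff (k : ℤ) (p : Nat.Primes) : ℝ :=
  (1 + ZMod.χ₄ p : ℤ) * Real.cos (k * primeAngle p)

lemma angularCoeff_prime (hk : 4 ∣ k) : angularCoeff k p = (primeCoeff k p : ℂ) :=
  ((exists_isPrimeAngle p.2).choose_spec k hk).1

lemma angularCoeff_prime_pow (hk : 4 ∣ k) (e : ℕ) :
    angularCoeff k (p ^ (e + 2)) = primeCoeff k p * angularCoeff k (p ^ (e + 1)) -
      (ZMod.χ₄ p : ℤ) * angularCoeff k (p ^ e) := by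
  rw [← angularCoeff_prime p hk]
  exact ((exists_isPrimeAngle p.2).choose_spec k hk).2 e

lemma abs_χ₄_le_one (a : ZMod 4) : |ZMod.χ₄ a| ≤ 1 := by
  revert a
  decide

lemma one_add_χ₄_nonneg (a : ZMod 4) : (0 : ℝ) ≤ (1 + ZMod.χ₄ a : ℤ) := by
  exact_mod_cast neg_le_iff_add_nonneg'.mp (abs_le.mp (abs_χ₄_le_one a)).1

lemma primeCoeff_zero_left : primeCoeff 0 p = (1 + ZMod.χ₄ p : ℤ) := by
  simp [primeCoeff]

lemma abs_primeCoeff_le (k : ℤ) : |primeCoeff k p| ≤ primeCoeff 0 p := by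
  rw [primeCoeff_zero_left, primeCoeff, abs_mul, abs_of_nonneg (one_add_χ₄_nonneg _)]
  exact mul_le_of_le_one_right (one_add_χ₄_nonneg _) (Real.abs_cos_le_one _)

lemma primeCoeff_zero_le_two : primeCoeff 0 p ≤ 2 := by
  rw [primeCoeff_zero_left]
  exact_mod_cast (by linarith [(abs_le.mp (abs_χ₄_le_one p)).2] : 1 + ZMod.χ₄ p ≤ 2)

lemma angularCoeff_zero_prime_pow_succ_sub (e : ℕ) :
    angularCoeff 0 (p ^ (e + 1)) - angularCoeff 0 (p ^ e) = ((ZMod.χ₄ p : ℤ) : ℂ) ^ (e + 1) := by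
  induction e with
  | zero =>
    rw [zero_add, pow_one, pow_one, pow_zero, angularCoeff_one (dvd_zero 4),
      angularCoeff_prime p (dvd_zero 4), primeCoeff_zero_left]
    push_cast
    ring
  | succ e ih =>
    rw [pow_succ ((ZMod.χ₄ p : ℤ) : ℂ), ← ih, angularCoeff_prime_pow p (dvd_zero 4),
      primeCoeff_zero_left]
    push_cast
    ring

lemma norm_angularCoeff_prime_pow_le (k : ℤ) (e : ℕ) : ‖angularCoeff k (p ^ e)‖ ≤ e + 1 := by
  refine (norm_angularCoeff_le k _).trans ((Complex.re_le_norm _).trans ?_)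
  induction e with
  | zero => simp [angularCoeff_one]
  | succ e ih =>
    have hχ : ‖((ZMod.χ₄ p : ℤ) : ℂ) ^ (e + 1)‖ ≤ 1 := by
      rw [norm_pow, Complex.norm_intCast]
      exact pow_le_one₀ (abs_nonneg _) (by exact_mod_cast abs_χ₄_le_one p)
    rw [← sub_add_cancel (angularCoeff 0 (p ^ (e + 1))) (angularCoeff 0 (p ^ e)),
      angularCoeff_zero_prime_pow_succ_sub]
    push_cast
    linarith [norm_add_le (((ZMod.χ₄ p : ℤ) : ℂ) ^ (e + 1)) (angularCoeff 0 (p ^ e))]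

end PrimeCoeff

/-! ### Cancellation of the angular characters over discs -/

section LipschitzAngularChar

variable {z w : ℂ}

lemma norm_pow_sub_pow_le (hz : ‖z‖ = 1) (hw : ‖w‖ = 1) (n : ℕ) :
    ‖z ^ n - w ^ n‖ ≤ n * ‖z - w‖ := by
  induction n with
  | zero => simp
  | succ n ih =>
    have hstep : z ^ (n + 1) - w ^ (n + 1) = z ^ n * (z - w) + (z ^ n - w ^ n) * w := by ring
    refine hstep ▸ (norm_add_le _ _).trans ?_
    rw [norm_mul, norm_mul, norm_pow, hz, hw, one_pow, Nat.cast_succ]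
    linarith

lemma norm_zpow_sub_zpow_le (hz : ‖z‖ = 1) (hw : ‖w‖ = 1) (k : ℤ) :
    ‖z ^ k - w ^ k‖ ≤ |(k : ℝ)| * ‖z - w‖ := by
  have hz₀ : z ≠ 0 := norm_ne_zero_iff.mp (hz ▸ one_ne_zero)
  have hw₀ : w ≠ 0 := norm_ne_zero_iff.mp (hw ▸ one_ne_zero)
  obtain ⟨n, rfl | rfl⟩ := Int.eq_nat_or_neg k
  · simpa using norm_pow_sub_pow_le hz hw n
  · have hinv : z⁻¹ ^ n - w⁻¹ ^ n = z ^ (-(n : ℤ)) - w ^ (-(n : ℤ)) := by simp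
    rw [← hinv]
    refine (norm_pow_sub_pow_le (by simp [hz]) (by simp [hw]) n).trans_eq ?_
    rw [inv_sub_inv hz₀ hw₀, norm_div, norm_mul, hz, hw, norm_sub_rev w z]
    simp

lemma norm_div_norm_sub_div_norm_le (hz : z ≠ 0) (hw : w ≠ 0) :
    ‖w / ‖w‖ - z / ‖z‖‖ ≤ 2 * ‖w - z‖ / ‖z‖ := by
  have hz' : (‖z‖ : ℂ) ≠ 0 := by simpa using hz
  have hw' : (‖w‖ : ℂ) ≠ 0 := by simpa using hw
  have hsplit : w / (‖w‖ : ℂ) - z / ‖z‖ =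
      (w / ‖w‖ * ((‖z‖ - ‖w‖ : ℝ) : ℂ) + (w - z)) / ‖z‖ := by
    push_cast
    field_simp
    ring
  rw [hsplit, norm_div, Complex.norm_real, norm_norm]
  gcongr
  refine (norm_add_le _ _).trans ?_
  rw [norm_mul, norm_div_norm_self hw, one_mul, Complex.norm_real, Real.norm_eq_abs, two_mul]
  gcongr
  exact norm_sub_rev w z ▸ abs_norm_sub_norm_le z w

lemma norm_angularChar_sub_le (k : ℤ) (hz : z ≠ 0) (hw : w ≠ 0) :
    ‖angularChar k w - angularChar k z‖ ≤ |(k : ℝ)| * (2 * ‖w - z‖ / ‖z‖) :=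
  (norm_zpow_sub_zpow_le (norm_div_norm_self hw) (norm_div_norm_self hz) k).trans
    (mul_le_mul_of_nonneg_left (norm_div_norm_sub_div_norm_le hz hw) (abs_nonneg _))

end LipschitzAngularChar

section GaussianFloor

open MeasureTheory

/-- The Gaussian integer in whose half-open unit cell `z` lies. -/
noncomputable def gaussianFloor (z : ℂ) : GaussianInt := ⟨⌊z.re⌋, ⌊z.im⌋⟩

variable {E : Type*} [NormedAddCommGroup E]

lemma norm_gaussianFloor_sub_le (z : ℂ) : ‖(gaussianFloor z : ℂ) - z‖ ≤ 2 := by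
  have hre : (z - gaussianFloor z).re = Int.fract z.re := by
    simp [gaussianFloor, GaussianInt.toComplex_def]
  have him : (z - gaussianFloor z).im = Int.fract z.im := by
    simp [gaussianFloor, GaussianInt.toComplex_def]
  rw [norm_sub_rev]
  refine (Complex.norm_le_abs_re_add_abs_im _).trans ?_
  rw [hre, him, Int.abs_fract, Int.abs_fract]
  linarith [Int.fract_lt_one z.re, Int.fract_lt_one z.im]

lemma norm_gaussianFloor_le (z : ℂ) : ‖(gaussianFloor z : ℂ)‖ ≤ ‖z‖ + 2 := by
  linarith [norm_le_norm_add_norm_sub' (gaussianFloor z : ℂ) z, norm_gaussianFloor_sub_le z]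

lemma norm_le_norm_gaussianFloor_add (z : ℂ) : ‖z‖ ≤ ‖(gaussianFloor z : ℂ)‖ + 2 := by
  linarith [norm_le_norm_add_norm_sub (gaussianFloor z : ℂ) z, norm_gaussianFloor_sub_le z]

lemma gaussianFloor_preimage_singleton (u : GaussianInt) :
    gaussianFloor ⁻¹' {u} = Complex.measurableEquivRealProd ⁻¹'
      (Set.Ico (u.re : ℝ) (u.re + 1) ×ˢ Set.Ico (u.im : ℝ) (u.im + 1)) := by
  ext z
  simp only [gaussianFloor, Set.mem_preimage, Set.mem_singleton_iff, Zsqrtd.ext_iff,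
    Int.floor_eq_iff, Set.mem_prod, Set.mem_Ico]
  rfl

lemma measurableSet_gaussianFloor_preimage_singleton (u : GaussianInt) :
    MeasurableSet (gaussianFloor ⁻¹' {u}) := by
  rw [gaussianFloor_preimage_singleton]
  exact Complex.measurableEquivRealProd.measurable (measurableSet_Ico.prod measurableSet_Ico)

lemma volume_gaussianFloor_preimage_singleton (u : GaussianInt) :
    volume (gaussianFloor ⁻¹' {u}) = 1 := by
  rw [gaussianFloor_preimage_singleton, Complex.volume_preserving_equiv_real_prod.measure_preimage
    (measurableSet_Ico.prod measurableSet_Ico).nullMeasurableSet, Measure.volume_eq_prod,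
    Measure.prod_prod]
  simp

lemma gaussianFloor_preimage_eq_biUnion (T : Finset GaussianInt) :
    gaussianFloor ⁻¹' T = ⋃ u ∈ T, gaussianFloor ⁻¹' {u} := by
  ext z
  simp

lemma measurableSet_gaussianFloor_preimage (T : Finset GaussianInt) :
    MeasurableSet (gaussianFloor ⁻¹' (T : Set GaussianInt)) := by
  rw [gaussianFloor_preimage_eq_biUnion]
  exact T.measurableSet_biUnion fun u _ => measurableSet_gaussianFloor_preimage_singleton u

lemma pairwiseDisjoint_gaussianFloor_preimage (T : Set GaussianInt) :
    T.PairwiseDisjoint fun u => gaussianFloor ⁻¹' {u} := by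
  intro u _ v _ huv
  exact (Set.disjoint_singleton.mpr huv).preimage _

lemma volume_gaussianFloor_preimage (T : Finset GaussianInt) :
    volume (gaussianFloor ⁻¹' (T : Set GaussianInt)) = T.card := by
  rw [gaussianFloor_preimage_eq_biUnion, measure_biUnion_finset
    (pairwiseDisjoint_gaussianFloor_preimage _)
    fun u _ => measurableSet_gaussianFloor_preimage_singleton u]
  simp [volume_gaussianFloor_preimage_singleton]

lemma integrableOn_comp_gaussianFloor_singleton (g : GaussianInt → E) (u : GaussianInt) :
    IntegrableOn (fun z => g (gaussianFloor z)) (gaussianFloor ⁻¹' {u}) := by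
  have hfinite : volume (gaussianFloor ⁻¹' {u}) ≠ ⊤ := by
    simp [volume_gaussianFloor_preimage_singleton]
  refine (integrableOn_const (C := g u) hfinite).congr_fun (fun z hz => ?_)
    (measurableSet_gaussianFloor_preimage_singleton u)
  rw [Set.mem_preimage, Set.mem_singleton_iff] at hz
  rw [hz]

lemma integrableOn_comp_gaussianFloor (g : GaussianInt → E) (T : Finset GaussianInt) :
    IntegrableOn (fun z => g (gaussianFloor z)) (gaussianFloor ⁻¹' T) := by
  rw [gaussianFloor_preimage_eq_biUnion, integrableOn_finset_iUnion]
  exact fun u _ => integrableOn_comp_gaussianFloor_singleton g u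

lemma setIntegral_comp_gaussianFloor [NormedSpace ℝ E] [CompleteSpace E] (g : GaussianInt → E)
    (T : Finset GaussianInt) :
    ∫ z in gaussianFloor ⁻¹' T, g (gaussianFloor z) = ∑ u ∈ T, g u := by
  have hcell (u : GaussianInt) : ∫ z in gaussianFloor ⁻¹' {u}, g (gaussianFloor z) = g u := by
    rw [setIntegral_congr_fun (measurableSet_gaussianFloor_preimage_singleton u)
      (g := fun _ => g u) fun z hz => by rw [Set.mem_singleton_iff.mp hz], setIntegral_const,
      Measure.real, volume_gaussianFloor_preimage_singleton, ENNReal.toReal_one, one_smul]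
  rw [gaussianFloor_preimage_eq_biUnion, integral_biUnion_finset T
    (fun u _ => measurableSet_gaussianFloor_preimage_singleton u)
    (pairwiseDisjoint_gaussianFloor_preimage _)
    fun u _ => integrableOn_comp_gaussianFloor_singleton g u]
  exact Finset.sum_congr rfl fun u _ => hcell u

end GaussianFloor

section DiscIntegral

open MeasureTheory Metric

variable {k : ℤ} {R : ℝ}

lemma volume_real_closedBall (hR : 0 ≤ R) :
    volume.real (closedBall (0 : ℂ) R) = Real.pi * R ^ 2 := by
  rw [Measure.real, Complex.volume_closedBall]
  simp [hR, mul_comm]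

lemma volume_real_annulus_le (hR : 1 ≤ R) :
    volume.real (closedBall (0 : ℂ) (R + 2) \ closedBall 0 (R - 2)) ≤ 16 * Real.pi * R := by
  rcases le_or_gt 2 R with h2 | h2
  · rw [measureReal_sdiff (closedBall_subset_closedBall (by linarith)) measurableSet_closedBall
      measure_closedBall_lt_top.ne, volume_real_closedBall (by linarith),
      volume_real_closedBall (by linarith)]
    nlinarith [Real.pi_pos]
  · refine (measureReal_mono Set.sdiff_subset measure_closedBall_lt_top.ne).trans ?_
    rw [volume_real_closedBall (by linarith), mul_right_comm, mul_comm]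
    gcongr
    nlinarith

lemma measurable_angularChar (k : ℤ) : Measurable (angularChar k) := by
  unfold angularChar
  fun_prop

lemma integrableOn_angularChar (k : ℤ) (R : ℝ) :
    IntegrableOn (angularChar k) (closedBall 0 R) :=
  (integrableOn_const (C := (1 : ℝ)) measure_closedBall_lt_top.ne).mono'
    (measurable_angularChar k).aestronglyMeasurable
    (.of_forall fun z => norm_angularChar_le_one k z)

/-- The rotation by `π / k` changes the sign of the integrand. -/
lemma integral_closedBall_angularChar (hk : k ≠ 0) (R : ℝ) :
    ∫ z in closedBall 0 R, angularChar k z = 0 := by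
  have hk' : (k : ℂ) ≠ 0 := Int.cast_ne_zero.mpr hk
  set α : Circle := Circle.exp (Real.pi / k)
  have hα : angularChar k α = -1 := by
    have harg : (k : ℂ) * ((Real.pi / k : ℝ) * Complex.I) = Real.pi * Complex.I := by
      push_cast
      field_simp
    rw [angularChar, Circle.norm_coe, Complex.ofReal_one, div_one, Circle.coe_exp,
      ← Complex.exp_int_mul, harg, Complex.exp_pi_mul_I]
  have hrot (z : ℂ) : angularChar k (rotation α z) = -angularChar k z := by
    rw [rotation_apply, angularChar_mul, hα, neg_one_mul]
  have h := (rotation α).measurePreserving.setIntegral_preimage_emb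
    (rotation α).toHomeomorph.measurableEmbedding (angularChar k) (closedBall 0 R)
  rw [LinearIsometryEquiv.preimage_closedBall, map_zero] at h
  simp only [hrot, integral_neg] at h
  exact self_eq_neg.mp h.symm

end DiscIntegral

section GaussianDisc

open MeasureTheory Metric

/-- The Gaussian integers of norm at most `N`, including `0`. -/
noncomputable def gaussianDisc (N : ℕ) : Finset GaussianInt :=
  (Finset.range (N + 1)).biUnion gaussianCircle

variable {k : ℤ} {N : ℕ} {u : GaussianInt} {ρ : ℝ}

lemma mem_gaussianDisc : u ∈ gaussianDisc N ↔ ‖(u : ℂ)‖ ≤ √N := by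
  have hnorm : ‖(u : ℂ)‖ ≤ √N ↔ u.norm ≤ N := by
    rw [Real.le_sqrt (norm_nonneg _) N.cast_nonneg, ← Complex.normSq_eq_norm_sq,
      ← GaussianInt.intCast_real_norm]
    norm_cast
  rw [hnorm, gaussianDisc, Finset.mem_biUnion]
  simp only [Finset.mem_range, mem_gaussianCircle]
  have := GaussianInt.norm_nonneg u
  exact ⟨fun ⟨_, _, _⟩ => by omega, fun h => ⟨u.norm.toNat, by omega, by omega⟩⟩

lemma sum_gaussianDisc (k : ℤ) (N : ℕ) :
    ∑ u ∈ gaussianDisc N, angularChar k u =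
      4 * ∑ n ∈ Finset.Icc 1 N, angularCoeff k n + 0 ^ k := by
  have hzero : angularChar k ((0 : GaussianInt) : ℂ) = 0 ^ k := by simp [angularChar]
  have hcircle : gaussianCircle 0 = {0} := by
    ext u
    simp [GaussianInt.norm_eq_zero]
  have hdisj : (Finset.range (N + 1) : Set ℕ).PairwiseDisjoint gaussianCircle := by
    intro m _ n _ hmn
    refine Finset.disjoint_left.mpr fun u hm hn => hmn ?_
    rw [mem_gaussianCircle] at hm hn
    exact_mod_cast hm.symm.trans hn
  rw [gaussianDisc, Finset.sum_biUnion hdisj, Finset.sum_range_eq_add_Ico _ N.succ_pos,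
    hcircle, Finset.sum_singleton, hzero, add_comm, Finset.mul_sum]
  congr 1
  refine Finset.sum_congr (by ext n; simp) fun n _ => ?_
  rw [angularCoeff, mul_div_cancel₀ _ (by norm_num : (4 : ℂ) ≠ 0)]

/-- Moving a cell to its corner changes the character by `O(|k| / |z|)` inside the disc, and the
cells near the boundary circle lie in an annulus of width `4`. -/
lemma norm_indicator_sub_indicator_le (k : ℤ) (N : ℕ) (hρ : 2 < ρ) (z : ℂ) :
    ‖(gaussianFloor ⁻¹' gaussianDisc N).indicator (fun z => angularChar k (gaussianFloor z)) z -
      (closedBall 0 √N).indicator (angularChar k) z‖ ≤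
    (closedBall 0 ρ).indicator (fun _ => 2) z +
      (closedBall 0 (√N + 2)).indicator (fun _ => 4 * |(k : ℝ)| / ρ) z +
      (closedBall 0 (√N + 2) \ closedBall 0 (√N - 2)).indicator (fun _ => 2) z := by
  have hle := norm_gaussianFloor_le z
  have hge := norm_le_norm_gaussianFloor_add z
  have hbound : ‖(gaussianFloor ⁻¹' gaussianDisc N).indicator
      (fun z => angularChar k (gaussianFloor z)) z -
      (closedBall 0 √N).indicator (angularChar k) z‖ ≤ 2 := by
    refine (norm_sub_le _ _).trans ?_
    linarith [norm_indicator_le_norm_self (s := gaussianFloor ⁻¹' gaussianDisc N)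
        (fun z => angularChar k (gaussianFloor z)) z, norm_angularChar_le_one k (gaussianFloor z),
      norm_indicator_le_norm_self (s := closedBall 0 √N) (angularChar k) z,
      norm_angularChar_le_one k z]
  have : 0 < ρ := by linarith
  classical
  simp only [Set.indicator_apply, Set.mem_preimage, Finset.mem_coe, mem_gaussianDisc,
    mem_closedBall_zero_iff, Set.mem_sdiff] at hbound ⊢
  rcases lt_or_ge (√N + 2) ‖z‖ with hout | hout
  · rw [if_neg (by linarith), if_neg (by linarith), sub_zero, norm_zero]
    positivity
  rcases le_or_gt ‖z‖ ρ with hin | hin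
  · rw [if_pos hin]
    refine hbound.trans ?_
    rw [add_assoc]
    exact le_add_of_nonneg_right (by positivity)
  rcases lt_or_ge (√N - 2) ‖z‖ with hann | hann
  · rw [if_pos (c := _ ∧ _) ⟨hout, hann.not_ge⟩]
    exact hbound.trans (le_add_of_nonneg_left (by positivity))
  · have hz : z ≠ 0 := norm_pos_iff.mp (by linarith)
    have hfloor : (gaussianFloor z : ℂ) ≠ 0 := norm_pos_iff.mp (by linarith)
    rw [if_pos (by linarith), if_pos (by linarith), if_pos hout, if_neg hin.not_ge, zero_add]
    refine ((norm_angularChar_sub_le k hz hfloor).trans ?_).trans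
      (le_add_of_nonneg_right (by positivity))
    calc |(k : ℝ)| * (2 * ‖(gaussianFloor z : ℂ) - z‖ / ‖z‖) ≤ |(k : ℝ)| * (2 * 2 / ρ) := by
          gcongr
          exact norm_gaussianFloor_sub_le z
      _ = 4 * |(k : ℝ)| / ρ := by ring

lemma norm_sum_gaussianDisc_le (hk : k ≠ 0) (hN : N ≠ 0) (hρ : 2 < ρ) :
    ‖∑ u ∈ gaussianDisc N, angularChar k u‖ ≤
      Real.pi * (2 * ρ ^ 2 + (√N + 2) ^ 2 * (4 * |(k : ℝ)| / ρ) + 32 * √N) := by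
  have hN' : 1 ≤ √N := Real.one_le_sqrt.mpr (by exact_mod_cast Nat.one_le_iff_ne_zero.mpr hN)
  have hE := measurableSet_gaussianFloor_preimage (gaussianDisc N)
  have hball (r c : ℝ) : Integrable ((closedBall (0 : ℂ) r).indicator fun _ => c) :=
    (integrableOn_const measure_closedBall_lt_top.ne).integrable_indicator measurableSet_closedBall
  have hann : Integrable ((closedBall (0 : ℂ) (√N + 2) \ closedBall 0 (√N - 2)).indicator
      fun _ => (2 : ℝ)) :=
    ((integrableOn_const measure_closedBall_lt_top.ne).mono_set
      Set.sdiff_subset).integrable_indicator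
        (measurableSet_closedBall.diff measurableSet_closedBall)
  rw [← setIntegral_comp_gaussianFloor (fun u => angularChar k u), ← sub_zero (integral _ _),
    ← integral_closedBall_angularChar hk √N, ← integral_indicator hE,
    ← integral_indicator measurableSet_closedBall, ← integral_sub
      ((integrableOn_comp_gaussianFloor (fun u => angularChar k u) _).integrable_indicator hE)
      ((integrableOn_angularChar k _).integrable_indicator measurableSet_closedBall)]
  refine (norm_integral_le_of_norm_le (((hball _ _).add (hball _ _)).add hann)
    (.of_forall (norm_indicator_sub_indicator_le k N hρ))).trans ?_
  rw [integral_add' ((hball _ _).add (hball _ _)) hann, integral_add' (hball _ _) (hball _ _),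
    integral_indicator_const _ measurableSet_closedBall,
    integral_indicator_const _ measurableSet_closedBall,
    integral_indicator_const _ (measurableSet_closedBall.diff measurableSet_closedBall),
    volume_real_closedBall (by linarith), volume_real_closedBall (by linarith)]
  simp only [smul_eq_mul]
  linarith [volume_real_annulus_le hN']

lemma norm_sum_angularCoeff_le (hk : k ≠ 0) (N : ℕ) :
    ‖∑ n ∈ Finset.Icc 1 N, angularCoeff k n‖ ≤ 100 * |(k : ℝ)| * (N : ℝ) ^ (3 / 4 : ℝ) := by
  rcases eq_or_ne N 0 with rfl | hN
  · simp
  obtain ⟨r, hr⟩ : ∃ r, r = √√N := ⟨_, rfl⟩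
  have hr1 : 1 ≤ r := by
    rw [hr, Real.one_le_sqrt, Real.one_le_sqrt]
    exact_mod_cast Nat.one_le_iff_ne_zero.mpr hN
  have hsqrt : √N = r ^ 2 := by rw [hr, Real.sq_sqrt (Real.sqrt_nonneg _)]
  have hpow : (N : ℝ) ^ (3 / 4 : ℝ) = r ^ 3 := by
    rw [hr, Real.sqrt_eq_rpow, Real.sqrt_eq_rpow, ← Real.rpow_mul N.cast_nonneg,
      ← Real.rpow_mul_natCast N.cast_nonneg]
    norm_num
  have hk1 : 1 ≤ |(k : ℝ)| := by exact_mod_cast Int.one_le_abs hk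
  have h23 : r ^ 2 ≤ |(k : ℝ)| * r ^ 3 :=
    (pow_le_pow_right₀ hr1 (by norm_num)).trans (le_mul_of_one_le_left (by positivity) hk1)
  have hmid : (r ^ 2 + 2) ^ 2 * (4 * |(k : ℝ)| / (3 * r)) ≤ 12 * (|(k : ℝ)| * r ^ 3) :=
    calc (r ^ 2 + 2) ^ 2 * (4 * |(k : ℝ)| / (3 * r))
        ≤ (3 * r ^ 2) ^ 2 * (4 * |(k : ℝ)| / (3 * r)) := by gcongr; nlinarith
      _ = 12 * (|(k : ℝ)| * r ^ 3) := by field_simp; norm_num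
  -- `ρ = 3 N ^ (1/4)` balances the inner disc against the Lipschitz error.
  have h := norm_sum_gaussianDisc_le hk hN (ρ := 3 * r) (by linarith)
  rw [sum_gaussianDisc, zero_zpow k hk, add_zero, norm_mul, RCLike.norm_ofNat, hsqrt] at h
  rw [hpow]
  nlinarith [Real.pi_lt_four, Real.pi_pos]

lemma angularCoeff_zero_nonneg (n : ℕ) : 0 ≤ (angularCoeff 0 n).re :=
  (norm_nonneg _).trans (norm_angularCoeff_le 0 n)

lemma card_gaussianDisc (N : ℕ) :
    ((gaussianDisc N).card : ℝ) = 4 * ∑ n ∈ Finset.Icc 1 N, (angularCoeff 0 n).re + 1 := by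
  simpa using congrArg Complex.re (sum_gaussianDisc 0 N)

lemma card_gaussianDisc_le (N : ℕ) : ((gaussianDisc N).card : ℝ) ≤ Real.pi * (√N + 2) ^ 2 := by
  have hsub : gaussianFloor ⁻¹' gaussianDisc N ⊆ closedBall 0 (√N + 2) := fun z hz =>
    mem_closedBall_zero_iff.mpr
      (by linarith [norm_le_norm_gaussianFloor_add z, mem_gaussianDisc.mp hz])
  have h := measureReal_mono hsub (measure_closedBall_lt_top (μ := volume)).ne
  rwa [volume_real_closedBall (by positivity), Measure.real, volume_gaussianFloor_preimage,
    ENNReal.toReal_natCast] at h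

lemma le_card_gaussianDisc (hN : 2 ≤ √N) : Real.pi * (√N - 2) ^ 2 ≤ (gaussianDisc N).card := by
  have hsub : closedBall 0 (√N - 2) ⊆ gaussianFloor ⁻¹' gaussianDisc N := fun z hz =>
    mem_gaussianDisc.mpr (by linarith [norm_gaussianFloor_le z, mem_closedBall_zero_iff.mp hz])
  have h := measureReal_mono hsub (μ := volume)
    (by rw [volume_gaussianFloor_preimage]; exact ENNReal.natCast_ne_top _)
  rwa [volume_real_closedBall (by linarith), Measure.real, volume_gaussianFloor_preimage,
    ENNReal.toReal_natCast] at h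

lemma sum_angularCoeff_zero_le (N : ℕ) :
    ∑ n ∈ Finset.Icc 1 N, (angularCoeff 0 n).re ≤ 9 * N := by
  rcases eq_or_ne N 0 with rfl | hN
  · simp
  have hN' : 1 ≤ √N := Real.one_le_sqrt.mpr (by exact_mod_cast Nat.one_le_iff_ne_zero.mpr hN)
  have hsq : √N ^ 2 = N := Real.sq_sqrt N.cast_nonneg
  have hdisc : Real.pi * (√N + 2) ^ 2 ≤ 4 * (3 * √N) ^ 2 := by
    gcongr
    · exact Real.pi_lt_four.le
    · linarith
  linarith [card_gaussianDisc N, card_gaussianDisc_le N]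

lemma one_le_sum_angularCoeff_zero (hN : N ≠ 0) :
    1 ≤ ∑ n ∈ Finset.Icc 1 N, (angularCoeff 0 n).re := by
  have h := Finset.single_le_sum (f := fun n => (angularCoeff 0 n).re)
    (fun n _ => angularCoeff_zero_nonneg n)
    (Finset.mem_Icc.mpr ⟨le_rfl, Nat.one_le_iff_ne_zero.mpr hN⟩)
  simpa only [angularCoeff_one (dvd_zero 4), Complex.one_re] using h

lemma le_sum_angularCoeff_zero (N : ℕ) :
    (N : ℝ) / 144 ≤ ∑ n ∈ Finset.Icc 1 N, (angularCoeff 0 n).re := by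
  rcases eq_or_ne N 0 with rfl | hN
  · simp
  have hsq : √N ^ 2 = N := Real.sq_sqrt N.cast_nonneg
  have hone := one_le_sum_angularCoeff_zero hN
  rcases le_or_gt √N 6 with h6 | h6
  · nlinarith [Real.sqrt_nonneg N]
  · have hcard := le_card_gaussianDisc (N := N) (by linarith)
    have hpi : 3 * (√N - 2) ^ 2 ≤ Real.pi * (√N - 2) ^ 2 := by gcongr; exact Real.pi_gt_three.le
    nlinarith [card_gaussianDisc N]

end GaussianDisc

/-! ### The Dirichlet series -/

section IntegralBounds

open MeasureTheory

variable {B : ℝ → ℝ} {c C σ : ℝ}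

lemma mul_rpow_neg_add_one {t : ℝ} (ht : 0 < t) (σ : ℝ) : t * t ^ (-(σ + 1)) = t ^ (-σ) := by
  nth_rw 1 [← Real.rpow_one t]
  rw [← Real.rpow_add ht]
  ring_nf

lemma integral_Ioi_one_rpow_neg (hσ : 1 < σ) :
    ∫ t in Set.Ioi (1 : ℝ), t ^ (-σ) = 1 / (σ - 1) := by
  rw [integral_Ioi_rpow_of_lt (by linarith) zero_lt_one, Real.one_rpow, neg_div, ← div_neg]
  ring_nf

lemma integrableOn_mul_rpow_neg (hσ : 1 < σ) (hB : Measurable B)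
    (hC : ∀ t > 1, |B t| ≤ C * t) :
    IntegrableOn (fun t => B t * t ^ (-(σ + 1))) (Set.Ioi 1) := by
  refine Integrable.mono' ((integrableOn_Ioi_rpow_of_lt (a := -σ) (by linarith)
    zero_lt_one).const_mul C) (hB.mul (by fun_prop)).aestronglyMeasurable
    (ae_restrict_of_forall_mem measurableSet_Ioi fun t ht => ?_)
  have ht0 : 0 < t := zero_lt_one.trans ht
  rw [norm_mul, Real.norm_of_nonneg (Real.rpow_nonneg ht0.le _), Real.norm_eq_abs,
    ← mul_rpow_neg_add_one ht0 σ, ← mul_assoc]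
  gcongr
  exact hC t ht

lemma integral_mul_rpow_neg_le (hσ : 1 < σ) (hB : Measurable B)
    (hC : ∀ t > 1, |B t| ≤ C * t) :
    ∫ t in Set.Ioi 1, B t * t ^ (-(σ + 1)) ≤ C / (σ - 1) := by
  have hint := (integrableOn_Ioi_rpow_of_lt (a := -σ) (by linarith) zero_lt_one).const_mul C
  refine (setIntegral_mono_on (integrableOn_mul_rpow_neg hσ hB hC) hint measurableSet_Ioi
    fun t ht => ?_).trans_eq (by rw [integral_const_mul, integral_Ioi_one_rpow_neg hσ, mul_one_div])
  have ht0 : 0 < t := zero_lt_one.trans ht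
  rw [← mul_rpow_neg_add_one ht0 σ, ← mul_assoc]
  gcongr
  exact (le_abs_self _).trans (hC t ht)

lemma le_integral_mul_rpow_neg (hσ : 1 < σ) (hB : Measurable B)
    (hC : ∀ t > 1, |B t| ≤ C * t) (hc : ∀ t > 1, c * t ≤ B t) :
    c / (σ - 1) ≤ ∫ t in Set.Ioi 1, B t * t ^ (-(σ + 1)) := by
  have hint := (integrableOn_Ioi_rpow_of_lt (a := -σ) (by linarith) zero_lt_one).const_mul c
  refine le_trans (by rw [integral_const_mul, integral_Ioi_one_rpow_neg hσ, mul_one_div])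
    (setIntegral_mono_on hint (integrableOn_mul_rpow_neg hσ hB hC) measurableSet_Ioi
      fun t ht => ?_)
  have ht0 : 0 < t := zero_lt_one.trans ht
  rw [← mul_rpow_neg_add_one ht0 σ, ← mul_assoc]
  gcongr
  exact hc t ht

end IntegralBounds

section DirichletSeries

open Asymptotics MeasureTheory

variable {k : ℤ} {s : ℂ} {t σ : ℝ}

lemma isBigO_sum_norm_angularCoeff (k : ℤ) :
    (fun n : ℕ ↦ ∑ j ∈ Finset.Icc 1 n, ‖angularCoeff k j‖) =O[atTop]
      fun n ↦ (n : ℝ) ^ (1 : ℝ) := by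
  refine IsBigO.of_bound 9 (.of_forall fun n => ?_)
  rw [Real.rpow_one, Real.norm_of_nonneg (Finset.sum_nonneg fun _ _ => norm_nonneg _),
    Real.norm_natCast]
  exact (Finset.sum_le_sum fun j _ => norm_angularCoeff_le k j).trans (sum_angularCoeff_zero_le n)

lemma LSeriesSummable_angularCoeff (k : ℤ) (hs : 1 < s.re) :
    LSeriesSummable (angularCoeff k) s :=
  LSeriesSummable_of_sum_norm_bigO (isBigO_sum_norm_angularCoeff k) zero_le_one hs

/-- The summatory function of the coefficients `angularCoeff k`. -/
noncomputable def angularSum (k : ℤ) (t : ℝ) : ℂ := ∑ n ∈ Finset.Icc 1 ⌊t⌋₊, angularCoeff k n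

/-- The Hecke `L`-function of the `k`-th angular character, defined by partial summation so that
for `k ≠ 0` the formula makes sense for `re s > 3 / 4`. -/
noncomputable def heckeL (k : ℤ) (s : ℂ) : ℂ :=
  s * ∫ t in Set.Ioi (1 : ℝ), angularSum k t * (t : ℂ) ^ (-(s + 1))

lemma heckeL_eq_LSeries (k : ℤ) (hs : 1 < s.re) : heckeL k s = LSeries (angularCoeff k) s :=
  (LSeries_eq_mul_integral' _ zero_le_one hs (isBigO_sum_norm_angularCoeff k)).symm

lemma measurable_angularSum (k : ℤ) : Measurable (angularSum k) :=
  (measurable_from_nat (f := fun N => ∑ n ∈ Finset.Icc 1 N, angularCoeff k n)).comp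
    Nat.measurable_floor

lemma norm_angularSum_le (hk : k ≠ 0) (ht : 0 ≤ t) :
    ‖angularSum k t‖ ≤ 100 * |(k : ℝ)| * t ^ (3 / 4 : ℝ) := by
  refine (norm_sum_angularCoeff_le hk _).trans ?_
  gcongr
  exact Nat.floor_le ht

lemma norm_heckeL_le (hk : k ≠ 0) (hs : 3 / 4 < s.re) :
    ‖heckeL k s‖ ≤ ‖s‖ * (100 * |(k : ℝ)| / (s.re - 3 / 4)) := by
  rw [heckeL, norm_mul]
  gcongr
  have hs' : 1 < s.re + 1 / 4 := by linarith
  have hint : IntegrableOn (fun t : ℝ => 100 * |(k : ℝ)| * t ^ (-(s.re + 1 / 4))) (Set.Ioi 1) :=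
    (integrableOn_Ioi_rpow_of_lt (by linarith) zero_lt_one).const_mul _
  refine (norm_integral_le_of_norm_le hint
    (ae_restrict_of_forall_mem measurableSet_Ioi fun t ht => ?_)).trans_eq ?_
  · have ht0 : 0 < t := zero_lt_one.trans ht
    have hexp : t ^ (-(s.re + 1 / 4)) = t ^ (3 / 4 : ℝ) * t ^ (-(s.re + 1)) := by
      rw [← Real.rpow_add ht0]
      ring_nf
    rw [norm_mul, Complex.norm_cpow_eq_rpow_re_of_pos ht0, Complex.neg_re, Complex.add_re,
      Complex.one_re, hexp, ← mul_assoc]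
    gcongr
    exact norm_angularSum_le hk ht0.le
  · rw [integral_const_mul, integral_Ioi_one_rpow_neg hs']
    ring

lemma norm_indicator_angularSum_le (hk : k ≠ 0) (t : ℝ) :
    ‖(Set.Ioi 1).indicator (angularSum k) t‖ ≤ 100 * |(k : ℝ)| * |t| ^ (3 / 4 : ℝ) := by
  by_cases ht : t ∈ Set.Ioi 1
  · have ht0 : 0 < t := zero_lt_one.trans ht
    rw [Set.indicator_of_mem ht, abs_of_pos ht0]
    exact norm_angularSum_le hk ht0.le
  · rw [Set.indicator_of_notMem ht, norm_zero]
    positivity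

lemma heckeL_eq_mul_mellin (k : ℤ) (s : ℂ) :
    heckeL k s = s * mellin ((Set.Ioi 1).indicator (angularSum k)) (-s) := by
  have hind (t : ℝ) : (t : ℂ) ^ (-s - 1) • (Set.Ioi 1).indicator (angularSum k) t =
      (Set.Ioi (1 : ℝ)).indicator (fun t : ℝ => angularSum k t * (t : ℂ) ^ (-(s + 1))) t := by
    by_cases ht : t ∈ Set.Ioi 1
    · rw [Set.indicator_of_mem ht, Set.indicator_of_mem ht, smul_eq_mul, mul_comm, neg_add']
    · rw [Set.indicator_of_notMem ht, Set.indicator_of_notMem ht, smul_zero]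
  simp only [heckeL, mellin, hind]
  rw [setIntegral_indicator measurableSet_Ioi, Set.inter_eq_right.mpr
    (Set.Ioi_subset_Ioi zero_le_one)]

lemma differentiableAt_mellin_angularSum (hk : k ≠ 0) (hs : 3 / 4 < s.re) :
    DifferentiableAt ℂ (mellin ((Set.Ioi 1).indicator (angularSum k))) (-s) := by
  have hcont : Continuous fun t : ℝ => 100 * |(k : ℝ)| * |t| ^ (3 / 4 : ℝ) :=
    continuous_const.mul (continuous_abs.rpow_const fun _ => Or.inr (by norm_num))
  refine mellin_differentiableAt_of_isBigO_rpow (a := -(3 / 4)) (b := (-s).re - 1)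
    (LocallyIntegrable.locallyIntegrableOn ?_ _) ?_ ?_ ?_ (by linarith)
  · exact hcont.locallyIntegrable.mono
      ((measurable_angularSum k).indicator measurableSet_Ioi).aestronglyMeasurable
      (.of_forall fun t => (norm_indicator_angularSum_le hk t).trans (Real.le_norm_self _))
  · refine IsBigO.of_bound (100 * |(k : ℝ)|) ?_
    filter_upwards [eventually_gt_atTop 0] with t ht
    refine (norm_indicator_angularSum_le hk t).trans_eq ?_
    rw [neg_neg, abs_of_pos ht, Real.norm_of_nonneg (by positivity)]
  · rw [Complex.neg_re]
    linarith
  · refine (EventuallyEq.trans_isBigO ?_ (isBigO_zero _ _))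
    filter_upwards [Ioo_mem_nhdsGT (zero_lt_one (α := ℝ))] with t ht
    exact Set.indicator_of_notMem (Set.notMem_Ioi.mpr ht.2.le) _

lemma differentiableAt_heckeL (hk : k ≠ 0) (hs : 3 / 4 < s.re) :
    DifferentiableAt ℂ (heckeL k) s := by
  rw [funext (heckeL_eq_mul_mellin k)]
  exact differentiableAt_id.mul
    ((differentiableAt_mellin_angularSum hk hs).comp s differentiableAt_id.neg)

lemma heckeL_zero (σ : ℝ) :
    heckeL 0 σ =
      ((σ * ∫ t in Set.Ioi (1 : ℝ), (angularSum 0 t).re * t ^ (-(σ + 1)) : ℝ) : ℂ) := by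
  have hreal (t : ℝ) : angularSum 0 t = (angularSum 0 t).re := by
    simp only [angularSum, angularCoeff_zero_left, Complex.re_sum, Complex.ofReal_re,
      Complex.ofReal_sum]
  rw [heckeL, Complex.ofReal_mul, ← integral_complex_ofReal]
  congr 1
  refine setIntegral_congr_fun measurableSet_Ioi fun t ht => ?_
  have ht0 : 0 ≤ t := zero_le_one.trans (le_of_lt ht)
  rw [hreal, Complex.ofReal_re, Complex.ofReal_mul, Complex.ofReal_cpow ht0]
  push_cast
  rfl

lemma abs_re_angularSum_zero_le (ht : 0 ≤ t) : |(angularSum 0 t).re| ≤ 9 * t := by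
  rw [angularSum, Complex.re_sum,
    abs_of_nonneg (Finset.sum_nonneg fun n _ => angularCoeff_zero_nonneg n)]
  refine (sum_angularCoeff_zero_le _).trans ?_
  gcongr
  exact Nat.floor_le ht

lemma le_re_angularSum_zero (ht : 1 ≤ t) : 1 / 288 * t ≤ (angularSum 0 t).re := by
  rw [angularSum, Complex.re_sum]
  have h1 : (1 : ℝ) ≤ ⌊t⌋₊ := by exact_mod_cast (Nat.one_le_floor_iff _).mpr ht
  linarith [le_sum_angularCoeff_zero ⌊t⌋₊, Nat.lt_floor_add_one t]

lemma norm_LSeries_angularCoeff_zero (hσ : 1 < σ) :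
    ‖LSeries (angularCoeff 0) σ‖ =
      σ * ∫ t in Set.Ioi (1 : ℝ), (angularSum 0 t).re * t ^ (-(σ + 1)) := by
  have hnonneg : 0 ≤ ∫ t in Set.Ioi (1 : ℝ), (angularSum 0 t).re * t ^ (-(σ + 1)) :=
    setIntegral_nonneg measurableSet_Ioi fun t ht => by
      have ht1 : 1 < t := ht
      have ht0 : 0 < t := zero_lt_one.trans ht1
      exact mul_nonneg (by linarith [le_re_angularSum_zero ht1.le]) (Real.rpow_nonneg ht0.le _)
  rw [← heckeL_eq_LSeries 0 (by simpa using hσ), heckeL_zero, Complex.norm_real,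
    Real.norm_of_nonneg (by positivity)]

lemma norm_LSeries_angularCoeff_zero_le (hσ : 1 < σ) :
    ‖LSeries (angularCoeff 0) σ‖ ≤ 9 * σ / (σ - 1) := by
  have h := integral_mul_rpow_neg_le hσ (Complex.measurable_re.comp (measurable_angularSum 0))
    fun t ht => abs_re_angularSum_zero_le (zero_le_one.trans ht.le)
  rw [norm_LSeries_angularCoeff_zero hσ, mul_comm 9, mul_div_assoc]
  exact mul_le_mul_of_nonneg_left h (by linarith)

lemma le_norm_LSeries_angularCoeff_zero (hσ : 1 < σ) :
    1 / 288 / (σ - 1) ≤ ‖LSeries (angularCoeff 0) σ‖ := by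
  have h := le_integral_mul_rpow_neg hσ (Complex.measurable_re.comp (measurable_angularSum 0))
    (fun t ht => abs_re_angularSum_zero_le (zero_le_one.trans ht.le))
    fun t ht => le_re_angularSum_zero ht.le
  have hpos : 0 ≤ 1 / 288 / (σ - 1) := div_nonneg (by norm_num) (by linarith)
  rw [norm_LSeries_angularCoeff_zero hσ]
  exact h.trans (le_mul_of_one_le_left (hpos.trans h) hσ.le)

end DirichletSeries

/-! ### The Euler product -/

section PrimePowers

variable {p : ℕ}

lemma norm_natCast_cpow_neg (hp : p.Prime) (s : ℂ) : ‖(p : ℂ) ^ (-s)‖ = (p : ℝ) ^ (-s.re) := by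
  rw [Complex.norm_natCast_cpow_of_pos hp.pos, Complex.neg_re]

lemma rpow_neg_le_inv (hp : p.Prime) {σ : ℝ} (hσ : 1 ≤ σ) : (p : ℝ) ^ (-σ) ≤ (p : ℝ)⁻¹ := by
  rw [← Real.rpow_neg_one]
  exact Real.rpow_le_rpow_of_exponent_le (by exact_mod_cast hp.one_lt.le) (neg_le_neg hσ)

lemma norm_natCast_cpow_neg_le (hp : p.Prime) {s : ℂ} (hs : 1 < s.re) :
    ‖(p : ℂ) ^ (-s)‖ ≤ (p : ℝ)⁻¹ :=
  (norm_natCast_cpow_neg hp s).trans_le (rpow_neg_le_inv hp hs.le)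

lemma LSeries_term_prime_pow (f : ℕ → ℂ) (hp : p.Prime) (s : ℂ) (e : ℕ) :
    LSeries.term f s (p ^ e) = f (p ^ e) * ((p : ℂ) ^ (-s)) ^ e := by
  rw [LSeries.term_of_ne_zero (pow_ne_zero _ hp.ne_zero), Nat.cast_pow,
    ← Complex.natCast_cpow_natCast_mul, mul_comm (e : ℂ), Complex.cpow_mul_nat, Complex.cpow_neg,
    inv_pow, div_eq_mul_inv]

lemma summable_primes_inv_sq : Summable fun p : Nat.Primes => (p : ℝ)⁻¹ ^ 2 := by
  refine ((Nat.Primes.summable_rpow (r := -2)).mpr (by norm_num)).congr fun p => ?_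
  rw [Real.rpow_neg (by positivity), inv_pow, Real.rpow_two]

end PrimePowers

section EulerProduct

variable {k : ℤ} {s : ℂ} {σ : ℝ} (p : Nat.Primes)

/-- The Euler factor of `heckeL k` at `p` is `(1 - eulerTerm k s p)⁻¹`. -/
noncomputable def eulerTerm (k : ℤ) (s : ℂ) (p : Nat.Primes) : ℂ :=
  primeCoeff k p * (p : ℂ) ^ (-s) - (ZMod.χ₄ p : ℤ) * ((p : ℂ) ^ (-s)) ^ 2

/-- A bound for the contribution of the higher prime powers to `log ‖heckeL k s‖`, uniform in `k`
and `s`. -/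
noncomputable def higherPowerBound : ℝ := ∑' p : Nat.Primes, 8 * (p : ℝ)⁻¹ ^ 2

/-- The real part of the prime sum approximating `log (heckeL k s)`. -/
noncomputable def primeSum (k : ℤ) (s : ℂ) : ℝ :=
  ∑' p : Nat.Primes, ((primeCoeff k p : ℂ) * (p : ℂ) ^ (-s)).re

lemma higherPowerBound_nonneg : 0 ≤ higherPowerBound := tsum_nonneg fun _ => by positivity

lemma norm_eulerTerm_sub_le (k : ℤ) (hs : 1 < s.re) :
    ‖eulerTerm k s p - primeCoeff k p * (p : ℂ) ^ (-s)‖ ≤ |(ZMod.χ₄ p : ℤ)| * (p : ℝ)⁻¹ ^ 2 := by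
  rw [eulerTerm, sub_sub_cancel_left, norm_neg, norm_mul, norm_pow, Complex.norm_intCast,
    ← Int.cast_abs]
  gcongr
  exact norm_natCast_cpow_neg_le p.2 hs

lemma norm_eulerTerm_le_add (k : ℤ) (hs : 1 < s.re) :
    ‖eulerTerm k s p‖ ≤ primeCoeff 0 p * (p : ℝ)⁻¹ + |(ZMod.χ₄ p : ℤ)| * (p : ℝ)⁻¹ ^ 2 := by
  have hmain : ‖(primeCoeff k p : ℂ) * (p : ℂ) ^ (-s)‖ ≤ primeCoeff 0 p * (p : ℝ)⁻¹ := by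
    rw [norm_mul, Complex.norm_real, Real.norm_eq_abs]
    exact mul_le_mul (abs_primeCoeff_le p k) (norm_natCast_cpow_neg_le p.2 hs) (norm_nonneg _)
      ((abs_nonneg _).trans (abs_primeCoeff_le p k))
  linarith [norm_le_norm_add_norm_sub' (eulerTerm k s p) (primeCoeff k p * (p : ℂ) ^ (-s)),
    norm_eulerTerm_sub_le p k hs]

lemma norm_eulerTerm_le (k : ℤ) (hs : 1 < s.re) :
    ‖eulerTerm k s p‖ ≤ 1 / 2 ∧ ‖eulerTerm k s p‖ ≤ 5 / 2 * (p : ℝ)⁻¹ := by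
  have hle := norm_eulerTerm_le_add p k hs
  have hp0 : 0 < (p : ℝ) := by exact_mod_cast p.2.pos
  have hinv0 : 0 < (p : ℝ)⁻¹ := inv_pos.mpr hp0
  have hinv {m : ℕ} (hm : m ≠ 0) (h : m ≤ p) : (p : ℝ)⁻¹ ≤ (m : ℝ)⁻¹ :=
    inv_anti₀ (by positivity) (by exact_mod_cast h)
  have h2 := hinv two_ne_zero p.2.two_le
  have hp1 := p.2.one_lt
  set y := (p : ℝ)⁻¹
  rw [primeCoeff_zero_left, ZMod.χ₄_nat_eq_if_mod_four] at hle
  norm_num at h2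
  split_ifs at hle with heven hone
  · norm_num at hle
    exact ⟨by linarith, by linarith⟩
  · have h5 := hinv (m := 5) (by norm_num) (by omega)
    norm_num at h5 hle
    exact ⟨by nlinarith, by nlinarith⟩
  · norm_num at hle
    exact ⟨by nlinarith, by nlinarith⟩

lemma one_sub_eulerTerm_ne_zero (k : ℤ) (hs : 1 < s.re) : 1 - eulerTerm k s p ≠ 0 := by
  intro h
  have hle := (norm_eulerTerm_le p k hs).1
  rw [← sub_eq_zero.mp h, norm_one] at hle
  norm_num at hle

lemma tsum_term_prime_pow (hk : 4 ∣ k) (hs : 1 < s.re) :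
    ∑' e : ℕ, LSeries.term (angularCoeff k) s (p ^ e) = (1 - eulerTerm k s p)⁻¹ := by
  obtain ⟨u, hu⟩ : ∃ u : ℕ → ℂ, u = fun e => LSeries.term (angularCoeff k) s (p ^ e) := ⟨_, rfl⟩
  have hsum : Summable u := hu ▸
    (LSeriesSummable_angularCoeff k hs).comp_injective (Nat.pow_right_injective p.2.two_le)
  have hsum' : Summable fun e => u (e + 1) := (summable_nat_add_iff 1).mpr hsum
  set x := (p : ℂ) ^ (-s) with hx
  have hterm (e : ℕ) : u e = angularCoeff k (p ^ e) * x ^ e := by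
    simp only [hu, LSeries_term_prime_pow _ p.2, hx]
  have hrec (e : ℕ) : u (e + 1 + 1) =
      primeCoeff k p * x * u (e + 1) - (ZMod.χ₄ p : ℤ) * x ^ 2 * u e := by
    rw [hterm, hterm, hterm, angularCoeff_prime_pow p hk e]
    ring
  have hzero : u 0 = 1 := by rw [hterm, pow_zero, pow_zero, angularCoeff_one hk, one_mul]
  have hone : u 1 = primeCoeff k p * x := by rw [hterm, pow_one, pow_one, angularCoeff_prime p hk]
  have htail := hsum.tsum_eq_zero_add
  have htail' := hsum'.tsum_eq_zero_add
  rw [zero_add, hone, tsum_congr hrec, (hsum'.mul_left _).tsum_sub (hsum.mul_left _),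
    tsum_mul_left, tsum_mul_left] at htail'
  rw [hzero] at htail
  rw [← hu]
  refine eq_inv_of_mul_eq_one_left ?_
  rw [eulerTerm, ← hx]
  linear_combination htail + htail' - (primeCoeff k p : ℂ) * x * htail

lemma term_angularCoeff_mul (hk : 4 ∣ k) {m n : ℕ} (hmn : m.Coprime n) :
    LSeries.term (angularCoeff k) s (m * n) =
      LSeries.term (angularCoeff k) s m * LSeries.term (angularCoeff k) s n := by
  rcases eq_or_ne m 0 with rfl | hm
  · simp
  rcases eq_or_ne n 0 with rfl | hn
  · simp
  rw [LSeries.term_of_ne_zero (mul_ne_zero hm hn), LSeries.term_of_ne_zero hm,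
    LSeries.term_of_ne_zero hn, angularCoeff_mul hk hmn, Nat.cast_mul,
    Complex.natCast_mul_natCast_cpow, mul_div_mul_comm]

lemma term_angularCoeff_one (hk : 4 ∣ k) : LSeries.term (angularCoeff k) s 1 = 1 := by
  rw [LSeries.term_of_ne_zero one_ne_zero, angularCoeff_one hk, Nat.cast_one, Complex.one_cpow,
    div_one]

lemma hasProd_LSeries_angularCoeff (hk : 4 ∣ k) (hs : 1 < s.re) :
    HasProd (fun p => (1 - eulerTerm k s p)⁻¹) (LSeries (angularCoeff k) s) := by
  simp only [← tsum_term_prime_pow _ hk hs]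
  exact EulerProduct.eulerProduct_hasProd (term_angularCoeff_one hk) (term_angularCoeff_mul hk)
    (LSeriesSummable_angularCoeff k hs).norm (LSeries.term_zero _ _)

lemma abs_primeCoeff_mul_rpow_le (k : ℤ) (σ : ℝ) :
    |primeCoeff k p| * (p : ℝ) ^ (-σ) ≤ 2 * (p : ℝ) ^ (-σ) := by
  gcongr
  exact (abs_primeCoeff_le p k).trans (primeCoeff_zero_le_two p)

lemma summable_abs_primeCoeff (k : ℤ) (hσ : 1 < σ) :
    Summable fun p : Nat.Primes => |primeCoeff k p| * (p : ℝ) ^ (-σ) :=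
  Summable.of_nonneg_of_le (fun _ => by positivity)
    (fun p => abs_primeCoeff_mul_rpow_le p k σ)
    (((Nat.Primes.summable_rpow (r := -σ)).mpr (by linarith)).mul_left 2)

lemma summable_primeCoeff (k : ℤ) (hs : 1 < s.re) :
    Summable fun p : Nat.Primes => (primeCoeff k p : ℂ) * (p : ℂ) ^ (-s) := by
  refine Summable.of_norm ((summable_abs_primeCoeff k hs).congr fun p => ?_)
  rw [norm_mul, norm_natCast_cpow_neg p.2, Complex.norm_real, Real.norm_eq_abs]

lemma summable_re_primeCoeff (k : ℤ) (hs : 1 < s.re) :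
    Summable fun p : Nat.Primes => ((primeCoeff k p : ℂ) * (p : ℂ) ^ (-s)).re :=
  (Complex.hasSum_re (summable_primeCoeff k hs).hasSum).summable

lemma norm_log_eulerFactor_sub_le (k : ℤ) (hs : 1 < s.re) :
    ‖Complex.log (1 - eulerTerm k s p)⁻¹ - primeCoeff k p * (p : ℂ) ^ (-s)‖ ≤
      8 * (p : ℝ)⁻¹ ^ 2 := by
  obtain ⟨hhalf, hinv⟩ := norm_eulerTerm_le p k hs
  set w := eulerTerm k s p
  have hone : (1 - ‖w‖)⁻¹ ≤ 2 := by
    rw [inv_le_comm₀ (by linarith) (by norm_num)]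
    linarith
  have hlog : ‖Complex.log (1 - w)⁻¹ - w‖ ≤ (5 / 2 * (p : ℝ)⁻¹) ^ 2 * 2 / 2 := by
    have : 0 ≤ (1 - ‖w‖)⁻¹ := inv_nonneg.mpr (by linarith)
    refine (Complex.norm_log_one_sub_inv_sub_self_le (by linarith)).trans ?_
    gcongr
  have hlin : ‖w - primeCoeff k p * (p : ℂ) ^ (-s)‖ ≤ (p : ℝ)⁻¹ ^ 2 := by
    refine (norm_eulerTerm_sub_le p k hs).trans (mul_le_of_le_one_left (by positivity) ?_)
    exact_mod_cast abs_χ₄_le_one p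
  nlinarith [norm_sub_le_norm_sub_add_norm_sub (Complex.log (1 - w)⁻¹) w
    (primeCoeff k p * (p : ℂ) ^ (-s)), sq_nonneg (p : ℝ)⁻¹]

lemma summable_log_eulerFactor_sub (k : ℤ) (hs : 1 < s.re) :
    Summable fun p : Nat.Primes =>
      Complex.log (1 - eulerTerm k s p)⁻¹ - primeCoeff k p * (p : ℂ) ^ (-s) :=
  .of_norm_bounded (summable_primes_inv_sq.mul_left 8) fun p => norm_log_eulerFactor_sub_le p k hs

lemma summable_log_eulerFactor (k : ℤ) (hs : 1 < s.re) :
    Summable fun p : Nat.Primes => Complex.log (1 - eulerTerm k s p)⁻¹ := by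
  simpa only [sub_add_cancel] using
    (summable_log_eulerFactor_sub k hs).add (summable_primeCoeff k hs)

lemma LSeries_angularCoeff_eq_exp (hk : 4 ∣ k) (hs : 1 < s.re) :
    LSeries (angularCoeff k) s =
      Complex.exp (∑' p : Nat.Primes, Complex.log (1 - eulerTerm k s p)⁻¹) := by
  refine (hasProd_LSeries_angularCoeff hk hs).unique ?_
  convert (summable_log_eulerFactor k hs).hasSum.cexp using 2 with p
  exact (Complex.exp_log (inv_ne_zero (one_sub_eulerTerm_ne_zero p k hs))).symm

lemma LSeries_angularCoeff_ne_zero (hk : 4 ∣ k) (hs : 1 < s.re) :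
    LSeries (angularCoeff k) s ≠ 0 :=
  LSeries_angularCoeff_eq_exp hk hs ▸ Complex.exp_ne_zero _

lemma abs_log_norm_LSeries_sub_primeSum_le (hk : 4 ∣ k) (hs : 1 < s.re) :
    |Real.log ‖LSeries (angularCoeff k) s‖ - primeSum k s| ≤ higherPowerBound := by
  rw [LSeries_angularCoeff_eq_exp hk hs, Complex.norm_exp, Real.log_exp, primeSum,
    ← Complex.re_tsum (summable_primeCoeff k hs), ← Complex.sub_re,
    ← (summable_log_eulerFactor k hs).tsum_sub (summable_primeCoeff k hs)]
  exact (Complex.abs_re_le_norm _).trans (tsum_of_norm_bounded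
    (summable_primes_inv_sq.mul_left 8).hasSum fun p => norm_log_eulerFactor_sub_le p k hs)

lemma abs_primeSum_zero_sub_log_le (hσ : 1 < σ) (hσ2 : σ ≤ 2) :
    |primeSum 0 σ - Real.log (1 / (σ - 1))| ≤ higherPowerBound + Real.log 288 := by
  have : 0 < σ - 1 := by linarith
  have hlow := Real.log_le_log (by positivity) (le_norm_LSeries_angularCoeff_zero hσ)
  have hup : ‖LSeries (angularCoeff 0) σ‖ ≤ 288 * (1 / (σ - 1)) := by
    refine (norm_LSeries_angularCoeff_zero_le hσ).trans ?_
    rw [mul_one_div]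
    gcongr
    linarith
  have hup := Real.log_le_log
    (norm_pos_iff.mpr (LSeries_angularCoeff_ne_zero (dvd_zero 4) (by simpa using hσ))) hup
  rw [Real.log_mul (by norm_num) (by positivity)] at hup
  rw [div_eq_mul_one_div, Real.log_mul (by norm_num) (by positivity), one_div (288 : ℝ),
    Real.log_inv] at hlow
  have h := abs_le.mp (abs_log_norm_LSeries_sub_primeSum_le (dvd_zero 4)
    (s := σ) (by simpa using hσ))
  exact abs_le.mpr ⟨by linarith, by linarith⟩

end EulerProduct

section AbsoluteEulerProduct

variable {k : ℤ} {σ : ℝ} (p : Nat.Primes)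

lemma norm_term_eq (f : ℕ → ℂ) (hσ : σ ≠ 0) (n : ℕ) :
    ‖LSeries.term f σ n‖ = ‖f n‖ * (n : ℝ) ^ (-σ) := by
  rcases eq_or_ne n 0 with rfl | hn
  · simp [Real.zero_rpow (neg_ne_zero.mpr hσ)]
  rw [LSeries.term_of_ne_zero hn, norm_div, Complex.norm_natCast_cpow_of_pos
    (Nat.pos_of_ne_zero hn), Complex.ofReal_re, Real.rpow_neg n.cast_nonneg, div_eq_mul_inv]

lemma hasSum_add_three_mul_half_pow : HasSum (fun e : ℕ => ((e : ℝ) + 3) * (1 / 2) ^ e) 8 := by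
  have h := (hasSum_coe_mul_geometric_of_norm_lt_one (r := (1 / 2 : ℝ)) (by norm_num)).add
    ((hasSum_geometric_of_norm_lt_one (ξ := (1 / 2 : ℝ)) (by norm_num)).mul_left 3)
  norm_num [← add_mul] at h ⊢
  exact h

lemma tsum_add_three_mul_pow_le {f : ℕ → ℝ} {y : ℝ} (hf : ∀ e, 0 ≤ f e) (h0 : 0 ≤ y)
    (h1 : y ≤ 1 / 2) (hle : ∀ e : ℕ, f e ≤ (e + 3) * y ^ (e + 2)) : ∑' e, f e ≤ 8 * y ^ 2 := by
  have hsum := hasSum_add_three_mul_half_pow.mul_right (y ^ 2)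
  have hle' (e : ℕ) : f e ≤ ((e : ℝ) + 3) * (1 / 2) ^ e * y ^ 2 := by
    refine (hle e).trans ?_
    rw [pow_add, ← mul_assoc]
    gcongr
  exact hasSum_le hle' (Summable.of_nonneg_of_le hf hle' hsum.summable).hasSum hsum

lemma tsum_norm_term_prime_pow_le (hk : 4 ∣ k) (hσ : 1 < σ) :
    ∑' e : ℕ, ‖LSeries.term (angularCoeff k) σ (p ^ e)‖ ≤
      Real.exp (|primeCoeff k p| * (p : ℝ) ^ (-σ) + 8 * (p : ℝ)⁻¹ ^ 2) := by
  have hσ' : 1 < (σ : ℂ).re := by simpa using hσ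
  have hsum : Summable fun e : ℕ => ‖LSeries.term (angularCoeff k) σ (p ^ e)‖ :=
    (LSeriesSummable_angularCoeff k hσ').norm.comp_injective
      (Nat.pow_right_injective p.2.two_le)
  have hterm (e : ℕ) : ‖LSeries.term (angularCoeff k) σ (p ^ e)‖ =
      ‖angularCoeff k (p ^ e)‖ * ((p : ℝ) ^ (-σ)) ^ e := by
    rw [LSeries_term_prime_pow _ p.2, norm_mul, norm_pow, norm_natCast_cpow_neg p.2,
      Complex.ofReal_re]
  have htail : ∑' e : ℕ, ‖LSeries.term (angularCoeff k) σ (p ^ (e + 2))‖ ≤ 8 * (p : ℝ)⁻¹ ^ 2 := by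
    refine tsum_add_three_mul_pow_le (fun _ => norm_nonneg _) (by positivity)
      (by rw [one_div]; exact inv_anti₀ two_pos (by exact_mod_cast p.2.two_le)) fun e => ?_
    rw [hterm]
    have hcoeff := norm_angularCoeff_prime_pow_le p k (e + 2)
    rw [Nat.cast_add, Nat.cast_two, add_assoc, two_add_one_eq_three] at hcoeff
    gcongr
    exact rpow_neg_le_inv p.2 hσ.le
  have hexp := Real.add_one_le_exp (|primeCoeff k p| * (p : ℝ) ^ (-σ) + 8 * (p : ℝ)⁻¹ ^ 2)
  rw [← hsum.sum_add_tsum_nat_add 2, Finset.sum_range_succ, Finset.sum_range_one, hterm, hterm,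
    pow_zero, pow_zero, pow_one, pow_one, angularCoeff_one hk, angularCoeff_prime p hk, norm_one,
    Complex.norm_real, Real.norm_eq_abs]
  linarith

lemma summable_norm_angularCoeff (k : ℤ) (hσ : 1 < σ) :
    Summable fun n : ℕ => ‖angularCoeff k n‖ * (n : ℝ) ^ (-σ) := by
  simpa only [norm_term_eq _ (by linarith : σ ≠ 0)] using
    (LSeriesSummable_angularCoeff k (s := σ) (by simpa using hσ)).norm

lemma tsum_norm_angularCoeff_le (hk : 4 ∣ k) (hσ : 1 < σ) :
    ∑' n : ℕ, ‖angularCoeff k n‖ * (n : ℝ) ^ (-σ) ≤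
      Real.exp (∑' p : Nat.Primes, |primeCoeff k p| * (p : ℝ) ^ (-σ) + higherPowerBound) := by
  have hprod := EulerProduct.eulerProduct_hasProd
    (f := fun n => ‖LSeries.term (angularCoeff k) σ n‖)
    (by rw [term_angularCoeff_one hk, norm_one])
    (fun hmn => by rw [term_angularCoeff_mul hk hmn, norm_mul])
    (LSeriesSummable_angularCoeff k (s := σ) (by simpa using hσ)).norm.norm (by simp)
  simp only [← norm_term_eq _ (by linarith : σ ≠ 0)]
  refine hasProd_le_of_prod_le hprod fun T => ?_
  calc ∏ p ∈ T, ∑' e : ℕ, ‖LSeries.term (angularCoeff k) σ (p ^ e)‖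
      ≤ ∏ p ∈ T, Real.exp (|primeCoeff k p| * (p : ℝ) ^ (-σ) + 8 * (p : ℝ)⁻¹ ^ 2) :=
        Finset.prod_le_prod (fun _ _ => tsum_nonneg fun _ => norm_nonneg _)
          fun p _ => tsum_norm_term_prime_pow_le p hk hσ
    _ = Real.exp (∑ p ∈ T, |primeCoeff k p| * (p : ℝ) ^ (-σ) + ∑ p ∈ T, 8 * (p : ℝ)⁻¹ ^ 2) := by
        rw [← Real.exp_sum, Finset.sum_add_distrib]
    _ ≤ _ := by
        gcongr
        · exact (summable_abs_primeCoeff k hσ).sum_le_tsum _ fun _ _ => by positivity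
        · exact (summable_primes_inv_sq.mul_left 8).sum_le_tsum _ fun _ _ => by positivity

end AbsoluteEulerProduct

/-! ### Growth of holomorphic functions and their zeros -/

section Landau

open Metric

variable {f : ℂ → ℂ} {c p ρ : ℂ} {r R M B : ℝ}

lemma exists_eq_mul_exp (hf : DifferentiableOn ℂ f (ball c r)) (h0 : ∀ z ∈ ball c r, f z ≠ 0) :
    ∃ h : ℂ → ℂ, DifferentiableOn ℂ h (ball c r) ∧ h c = 0 ∧
      ∀ z ∈ ball c r, f z = f c * Complex.exp (h z) := by
  have hq : DifferentiableOn ℂ (fun z => deriv f z / f z) (ball c r) :=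
    (hf.deriv isOpen_ball).div hf h0
  obtain ⟨h, hh⟩ := hq.isExactOn_ball
  have hderiv : ∀ z ∈ ball c r, HasDerivAt (fun z => f z * Complex.exp (-h z)) 0 z := by
    intro z hz
    have hfz := (hf.differentiableAt (isOpen_ball.mem_nhds hz)).hasDerivAt
    refine (hfz.mul (hh z hz).neg.cexp).congr_deriv ?_
    simp only
    field_simp [h0 z hz]
    ring
  refine ⟨fun z => h z - h c,
    fun z hz => (hh z hz).differentiableAt.differentiableWithinAt.sub_const _, sub_self _,
    fun z hz => ?_⟩
  have hconst : f z * Complex.exp (-h z) = f c * Complex.exp (-h c) :=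
    isOpen_ball.is_const_of_deriv_eq_zero (convex_ball c r).isPreconnected
      (fun w hw => (hderiv w hw).differentiableAt.differentiableWithinAt)
      (fun w hw => (hderiv w hw).deriv) hz (mem_ball_self (pos_of_mem_ball hz))
  calc f z = f z * Complex.exp (-h z) * Complex.exp (h z) := by
        rw [mul_assoc, ← Complex.exp_add, neg_add_cancel, Complex.exp_zero, mul_one]
    _ = f c * Complex.exp (h z - h c) := by
        rw [hconst, mul_assoc, ← Complex.exp_add, neg_add_eq_sub]

lemma abs_log_norm_sub_log_norm_le (hM : 0 < M) (hf : DifferentiableOn ℂ f (ball c r))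
    (h0 : ∀ z ∈ ball c r, f z ≠ 0) (hb : ∀ z ∈ ball c r, ‖f z‖ ≤ Real.exp M * ‖f c‖)
    (hp : p ∈ ball c r) :
    |Real.log ‖f p‖ - Real.log ‖f c‖| ≤ 2 * M * ‖p - c‖ / (r - ‖p - c‖) := by
  have hr : 0 < r := pos_of_mem_ball hp
  have hfc : 0 < ‖f c‖ := norm_pos_iff.mpr (h0 c (mem_ball_self hr))
  obtain ⟨h, hh, hhc, hfh⟩ := exists_eq_mul_exp hf h0
  have hnorm : ∀ z ∈ ball c r, ‖f z‖ = Real.exp (h z).re * ‖f c‖ := fun z hz => by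
    rw [hfh z hz, norm_mul, Complex.norm_exp, mul_comm]
  have hmaps : Set.MapsTo (fun w => c + w) (ball 0 r) (ball c r) := fun w hw => by
    simpa [dist_eq_norm] using hw
  have hre : Set.MapsTo (fun w => h (c + w)) (ball 0 r) {z | z.re ≤ M} := fun w hw => by
    have hw' := hb _ (hmaps hw)
    rw [hnorm _ (hmaps hw)] at hw'
    exact Real.exp_le_exp.mp (le_of_mul_le_mul_right hw' hfc)
  have hbound := Complex.borelCaratheodory_zero (z := p - c) hM
    (hh.comp (by fun_prop) hmaps) hre hr (by simpa [dist_eq_norm] using hp) (by simpa using hhc)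
  rw [Function.comp_apply, add_sub_cancel] at hbound
  rw [hnorm p hp, Real.log_mul (Real.exp_ne_zero _) hfc.ne', Real.log_exp, add_sub_cancel_right]
  exact (Complex.abs_re_le_norm _).trans hbound

lemma norm_le_exp_mul_norm_of_ne_zero (hM : 0 < M) (hf : DifferentiableOn ℂ f (ball c r))
    (h0 : ∀ z ∈ ball c r, f z ≠ 0) (hb : ∀ z ∈ ball c r, ‖f z‖ ≤ Real.exp M * ‖f c‖)
    (hp : p ∈ ball c r) :
    ‖f p‖ ≤ Real.exp (2 * M * ‖p - c‖ / (r - ‖p - c‖)) * ‖f c‖ := by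
  have hfc : 0 < ‖f c‖ := norm_pos_iff.mpr (h0 c (mem_ball_self (pos_of_mem_ball hp)))
  have hfp : 0 < ‖f p‖ := norm_pos_iff.mpr (h0 p hp)
  rw [← Real.log_le_log_iff hfp (by positivity), Real.log_mul (Real.exp_ne_zero _) hfc.ne',
    Real.log_exp, ← sub_le_iff_le_add]
  exact (le_abs_self _).trans (abs_log_norm_sub_log_norm_le hM hf h0 hb hp)

lemma eq_sub_mul_dslope (hρ : f ρ = 0) (z : ℂ) : f z = (z - ρ) * dslope f ρ z := by
  rw [← smul_eq_mul, sub_smul_dslope, hρ, sub_zero]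

lemma differentiableOn_dslope_closedBall (hR : 0 < R) (hf : DifferentiableOn ℂ f (closedBall c R))
    (hρ : ρ ∈ closedBall c (R / 3)) : DifferentiableOn ℂ (dslope f ρ) (closedBall c R) :=
  (Complex.differentiableOn_dslope (closedBall_mem_nhds_of_mem
    (closedBall_subset_ball (by linarith) hρ))).mpr hf

/-- On the bounding circle a zero `ρ` is at least twice as far away as it is from the centre, so
dividing it out halves the ratio of the maximum to the central value. -/
lemma norm_dslope_le (hR : 0 < R) (hB : 0 ≤ B) (hf : DifferentiableOn ℂ f (closedBall c R))
    (hb : ∀ z ∈ closedBall c R, ‖f z‖ ≤ B * ‖f c‖) (hρ : ρ ∈ closedBall c (R / 3))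
    (hfρ : f ρ = 0) {z : ℂ} (hz : z ∈ closedBall c R) :
    ‖dslope f ρ z‖ ≤ B / 2 * ‖dslope f ρ c‖ := by
  have hcρ : ‖c - ρ‖ ≤ R / 3 := by rwa [← mem_closedBall_iff_norm']
  have hdiff : DiffContOnCl ℂ (dslope f ρ) (ball c R) := by
    refine DifferentiableOn.diffContOnCl ?_
    rw [closure_ball c hR.ne']
    exact differentiableOn_dslope_closedBall hR hf hρ
  refine Complex.norm_le_of_forall_mem_frontier_norm_le isBounded_ball hdiff (fun w hw => ?_)
    (by rwa [closure_ball c hR.ne'])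
  rw [frontier_ball c hR.ne', mem_sphere_iff_norm] at hw
  have hwρ : 2 * (R / 3) ≤ ‖w - ρ‖ := by
    have := norm_sub_le_norm_sub_add_norm_sub w ρ c
    rw [hw, norm_sub_rev ρ c] at this
    linarith
  have hfw := hb w (by rw [mem_closedBall_iff_norm, hw])
  rw [eq_sub_mul_dslope hfρ w, eq_sub_mul_dslope hfρ c, norm_mul, norm_mul] at hfw
  have hscaled : 2 * (R / 3) * ‖dslope f ρ w‖ ≤ 2 * (R / 3) * (B / 2 * ‖dslope f ρ c‖) :=
    calc 2 * (R / 3) * ‖dslope f ρ w‖ ≤ ‖w - ρ‖ * ‖dslope f ρ w‖ := by gcongr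
      _ ≤ B * (‖c - ρ‖ * ‖dslope f ρ c‖) := hfw
      _ ≤ B * (R / 3 * ‖dslope f ρ c‖) := by gcongr
      _ = 2 * (R / 3) * (B / 2 * ‖dslope f ρ c‖) := by ring
  exact le_of_mul_le_mul_left hscaled (by positivity)

/-- Every zero divided out halves the bound, so after finitely many steps none is left and the
Borel–Carathéodory bound applies. Restoring the factor `z - ρ` only helps if `p` is closer to `ρ`
than `c`. -/
lemma norm_le_exp_mul_norm_of_lt_two_pow (hM : 0 < M) (hp : p ∈ ball c (R / 3)) (n : ℕ)
    (hf : DifferentiableOn ℂ f (closedBall c R)) (hfc : f c ≠ 0)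
    (hb : ∀ z ∈ closedBall c R, ‖f z‖ ≤ B * ‖f c‖) (hBM : B ≤ Real.exp M) (hBn : B < 2 ^ n)
    (hzero : ∀ ρ, f ρ = 0 → ‖p - ρ‖ ≤ ‖c - ρ‖) :
    ‖f p‖ ≤ Real.exp (2 * M * ‖p - c‖ / (R / 3 - ‖p - c‖)) * ‖f c‖ := by
  have hR : 0 < R := by linarith [pos_of_mem_ball hp]
  induction n generalizing f B with
  | zero =>
    have hc := hb c (mem_closedBall_self hR.le)
    nlinarith [norm_pos_iff.mpr hfc]
  | succ n ih =>
    by_cases hne : ∀ z ∈ closedBall c (R / 3), f z ≠ 0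
    · have hsub : ball c (R / 3) ⊆ closedBall c R :=
        (ball_subset_ball (by linarith)).trans ball_subset_closedBall
      refine norm_le_exp_mul_norm_of_ne_zero hM (hf.mono hsub)
        (fun z hz => hne z (ball_subset_closedBall hz)) (fun z hz => ?_) hp
      exact (hb z (hsub hz)).trans (by gcongr)
    push Not at hne
    obtain ⟨ρ, hρ, hfρ⟩ := hne
    have hB : 0 ≤ B := by
      have hc := hb c (mem_closedBall_self hR.le)
      nlinarith [norm_pos_iff.mpr hfc]
    have hgc : dslope f ρ c ≠ 0 := fun h => hfc (by rw [eq_sub_mul_dslope hfρ, h, mul_zero])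
    have hg := ih (differentiableOn_dslope_closedBall hR hf hρ) hgc
      (fun z hz => norm_dslope_le hR hB hf hb hρ hfρ hz) (by linarith)
      (by rw [pow_succ] at hBn; linarith)
      (fun z hz => hzero z (by rw [eq_sub_mul_dslope hfρ, hz, mul_zero]))
    rw [eq_sub_mul_dslope hfρ p, eq_sub_mul_dslope hfρ c, norm_mul, norm_mul, mul_left_comm]
    gcongr
    exact hzero ρ hfρ

theorem norm_le_exp_mul_norm_of_zeros (hM : 0 < M) (hp : p ∈ ball c (R / 3))
    (hf : DifferentiableOn ℂ f (closedBall c R)) (hfc : f c ≠ 0)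
    (hb : ∀ z ∈ closedBall c R, ‖f z‖ ≤ Real.exp M * ‖f c‖)
    (hzero : ∀ ρ, f ρ = 0 → ‖p - ρ‖ ≤ ‖c - ρ‖) :
    ‖f p‖ ≤ Real.exp (2 * M * ‖p - c‖ / (R / 3 - ‖p - c‖)) * ‖f c‖ := by
  obtain ⟨n, hn⟩ := pow_unbounded_of_one_lt (Real.exp M) one_lt_two
  exact norm_le_exp_mul_norm_of_lt_two_pow hM hp n hf hfc hb le_rfl hn hzero

theorem norm_sub_mul_norm_le_of_zeros (hM : 0 < M) (hp : p ∈ ball c (R / 3))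
    (hf : DifferentiableOn ℂ f (closedBall c R)) (hfc : f c ≠ 0)
    (hb : ∀ z ∈ closedBall c R, ‖f z‖ ≤ Real.exp M * ‖f c‖)
    (hzero : ∀ ρ, f ρ = 0 → ‖p - ρ‖ ≤ ‖c - ρ‖) (hρ : ρ ∈ closedBall c (R / 3)) (hfρ : f ρ = 0) :
    ‖c - ρ‖ * ‖f p‖ ≤
      Real.exp (2 * M * ‖p - c‖ / (R / 3 - ‖p - c‖)) * (‖f c‖ * ‖p - ρ‖) := by
  have hR : 0 < R := by linarith [pos_of_mem_ball hp]
  have hgc : dslope f ρ c ≠ 0 := fun h => hfc (by rw [eq_sub_mul_dslope hfρ, h, mul_zero])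
  have hgb : ∀ z ∈ closedBall c R, ‖dslope f ρ z‖ ≤ Real.exp M * ‖dslope f ρ c‖ := fun z hz => by
    refine (norm_dslope_le hR (Real.exp_pos M).le hf hb hρ hfρ hz).trans ?_
    gcongr
    linarith [Real.exp_pos M]
  have hg := norm_le_exp_mul_norm_of_zeros hM hp (differentiableOn_dslope_closedBall hR hf hρ)
    hgc hgb fun z hz => hzero z (by rw [eq_sub_mul_dslope hfρ, hz, mul_zero])
  rw [eq_sub_mul_dslope hfρ p, eq_sub_mul_dslope hfρ c, norm_mul, norm_mul]
  calc ‖c - ρ‖ * (‖p - ρ‖ * ‖dslope f ρ p‖)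
      = ‖c - ρ‖ * ‖p - ρ‖ * ‖dslope f ρ p‖ := by ring
    _ ≤ ‖c - ρ‖ * ‖p - ρ‖ *
        (Real.exp (2 * M * ‖p - c‖ / (R / 3 - ‖p - c‖)) * ‖dslope f ρ c‖) := by gcongr
    _ = _ := by ring

end Landau

/-! ### A zero-free region and the size of `primeSum` near `1` -/

section PrimeSum

variable {u v : ℝ}

lemma re_primeCoeff_mul_cpow (k : ℤ) (p : Nat.Primes) (s : ℂ) :
    ((primeCoeff k p : ℂ) * (p : ℂ) ^ (-s)).re =
      primeCoeff k p * ((p : ℝ) ^ (-s.re) * Real.cos (s.im * Real.log p)) := by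
  have hp : (0 : ℝ) < p := by exact_mod_cast p.2.pos
  rw [Complex.re_ofReal_mul, Complex.cpow_def_of_ne_zero (by exact_mod_cast hp.ne'),
    ← Complex.natCast_log, Complex.exp_re, Complex.re_ofReal_mul, Complex.im_ofReal_mul,
    Complex.neg_re, Complex.neg_im, ← Real.rpow_def_of_pos hp, mul_neg, Real.cos_neg,
    mul_comm (Real.log p)]

lemma primeSum_ofReal (k : ℤ) (σ : ℝ) :
    primeSum k σ = ∑' p : Nat.Primes, primeCoeff k p * (p : ℝ) ^ (-σ) :=
  tsum_congr fun p => by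
    rw [re_primeCoeff_mul_cpow, Complex.ofReal_im, zero_mul, Real.cos_zero, mul_one,
      Complex.ofReal_re]

lemma primeCoeff_zero_nonneg (p : Nat.Primes) : 0 ≤ primeCoeff 0 p :=
  (abs_nonneg _).trans (abs_primeCoeff_le p 0)

lemma summable_primeCoeff_mul_rpow (k : ℤ) (hu : 1 < u) :
    Summable fun p : Nat.Primes => primeCoeff k p * (p : ℝ) ^ (-u) :=
  Summable.of_norm ((summable_abs_primeCoeff k hu).congr fun p => by
    rw [Real.norm_eq_abs, abs_mul, abs_of_nonneg (Real.rpow_nonneg p.1.cast_nonneg (-u))])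

lemma rpow_neg_sub_rpow_neg_nonneg (p : Nat.Primes) (huv : u ≤ v) :
    0 ≤ (p : ℝ) ^ (-u) - (p : ℝ) ^ (-v) :=
  sub_nonneg.mpr (Real.rpow_le_rpow_of_exponent_le (by exact_mod_cast p.2.one_lt.le)
    (neg_le_neg huv))

lemma neg_primeSum_zero_le (k : ℤ) {s : ℂ} (hs : 1 < s.re) : -primeSum 0 s.re ≤ primeSum k s := by
  rw [primeSum_ofReal, ← tsum_neg, primeSum]
  refine (summable_primeCoeff_mul_rpow 0 hs).neg.tsum_le_tsum (fun p => ?_)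
    (summable_re_primeCoeff k hs)
  refine neg_le_of_neg_le (((neg_le_abs _).trans (Complex.abs_re_le_norm _)).trans ?_)
  rw [norm_mul, norm_natCast_cpow_neg p.2, Complex.norm_real, Real.norm_eq_abs]
  gcongr
  exact abs_primeCoeff_le p k

lemma abs_primeSum_sub_le (k : ℤ) (hu : 1 < u) (huv : u ≤ v) :
    |primeSum k u - primeSum k v| ≤ primeSum 0 u - primeSum 0 v := by
  have hsum (j : ℤ) {w : ℝ} (hw : u ≤ w) := summable_primeCoeff_mul_rpow j (hu.trans_le hw)
  simp only [primeSum_ofReal]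
  rw [← (hsum k le_rfl).tsum_sub (hsum k huv), ← (hsum 0 le_rfl).tsum_sub (hsum 0 huv),
    ← Real.norm_eq_abs]
  refine tsum_of_norm_bounded ((hsum 0 le_rfl).sub (hsum 0 huv)).hasSum fun p => ?_
  have hd := rpow_neg_sub_rpow_neg_nonneg p huv
  rw [← mul_sub, ← mul_sub, norm_mul, Real.norm_eq_abs, Real.norm_of_nonneg hd]
  gcongr
  exact abs_primeCoeff_le p k

lemma three_add_four_mul_cos_mul_cos_nonneg (x y : ℝ) :
    0 ≤ 3 + 4 * (Real.cos x * Real.cos y) + Real.cos (2 * x) * Real.cos (2 * y) := by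
  rw [Real.cos_two_mul, Real.cos_two_mul]
  have hx := Real.sin_sq_add_cos_sq x
  have hy := Real.sin_sq_add_cos_sq y
  nlinarith [sq_nonneg (Real.cos x * Real.cos y + 1), sq_nonneg (Real.sin x * Real.sin y),
    sq_nonneg (Real.sin x), sq_nonneg (Real.sin y), sq_nonneg (Real.sin x * Real.cos y)]

lemma three_four_one (k : ℤ) (γ : ℝ) (hu : 1 < u) (huv : u ≤ v) :
    0 ≤ 3 * (primeSum 0 u - primeSum 0 v) + 4 * (primeSum k ⟨u, γ⟩ - primeSum k ⟨v, γ⟩) +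
      (primeSum (2 * k) ⟨u, 2 * γ⟩ - primeSum (2 * k) ⟨v, 2 * γ⟩) := by
  have hdiff (j : ℤ) (t : ℝ) := (summable_re_primeCoeff j (s := ⟨u, t⟩) hu).hasSum.sub
    (summable_re_primeCoeff j (s := ⟨v, t⟩) (hu.trans_le huv)).hasSum
  refine ((((hdiff 0 0).mul_left 3).add ((hdiff k γ).mul_left 4)).add
    (hdiff (2 * k) (2 * γ))).nonneg fun p => ?_
  have hcos (t : ℝ) : primeCoeff k p * Real.cos t =
      primeCoeff 0 p * (Real.cos (k * primeAngle p) * Real.cos t) := by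
    rw [primeCoeff_zero_left, primeCoeff, mul_assoc]
  have hcos2 (t : ℝ) : primeCoeff (2 * k) p * Real.cos t =
      primeCoeff 0 p * (Real.cos (2 * (k * primeAngle p)) * Real.cos t) := by
    rw [primeCoeff_zero_left, primeCoeff, mul_assoc]
    push_cast
    ring_nf
  have hnonneg := mul_nonneg
    (mul_nonneg (primeCoeff_zero_nonneg p) (rpow_neg_sub_rpow_neg_nonneg p huv))
    (three_add_four_mul_cos_mul_cos_nonneg (k * primeAngle p) (γ * Real.log p))
  simp only [re_primeCoeff_mul_cpow, zero_mul, Real.cos_zero, mul_one, mul_assoc 2 γ]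
  linear_combination hnonneg - 4 * ((p : ℝ) ^ (-u) - (p : ℝ) ^ (-v)) * hcos (γ * Real.log p) -
    ((p : ℝ) ^ (-u) - (p : ℝ) ^ (-v)) * hcos2 (2 * (γ * Real.log p))

end PrimeSum

lemma four_le_abs {k : ℤ} (hk0 : k ≠ 0) (hk : 4 ∣ k) : (4 : ℝ) ≤ |(k : ℝ)| := by
  exact_mod_cast Int.le_of_dvd (abs_pos.mpr hk0) ((dvd_abs 4 k).mpr hk)

lemma one_le_log_abs {k : ℤ} (hk0 : k ≠ 0) (hk : 4 ∣ k) : 1 ≤ Real.log |(k : ℝ)| := by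
  have := four_le_abs hk0 hk
  rw [Real.le_log_iff_exp_le (by linarith)]
  linarith [Real.exp_one_lt_d9]

section ZeroFree

open Metric

variable {k : ℤ}

lemma norm_heckeL_le_of_norm_le_three (hk0 : k ≠ 0) {z : ℂ} (hre : 7 / 8 ≤ z.re) (hz : ‖z‖ ≤ 3) :
    ‖heckeL k z‖ ≤ 2400 * |(k : ℝ)| := by
  have : 0 < z.re - 3 / 4 := by linarith
  calc ‖heckeL k z‖ ≤ ‖z‖ * (100 * |(k : ℝ)| / (z.re - 3 / 4)) :=
        norm_heckeL_le hk0 (by linarith)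
    _ ≤ 3 * (100 * |(k : ℝ)| / (1 / 8)) := by gcongr; linarith
    _ = 2400 * |(k : ℝ)| := by ring

lemma heckeL_ne_zero (hk : 4 ∣ k) {s : ℂ} (hs : 1 < s.re) : heckeL k s ≠ 0 :=
  heckeL_eq_LSeries k hs ▸ LSeries_angularCoeff_ne_zero hk hs

lemma re_le_one_of_heckeL_eq_zero (hk : 4 ∣ k) {s : ℂ} (hs : heckeL k s = 0) : s.re ≤ 1 :=
  not_lt.mp fun h => heckeL_ne_zero hk h hs

lemma abs_log_norm_heckeL_sub_primeSum_le (hk : 4 ∣ k) {s : ℂ} (hs : 1 < s.re) :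
    |Real.log ‖heckeL k s‖ - primeSum k s| ≤ higherPowerBound :=
  heckeL_eq_LSeries k hs ▸ abs_log_norm_LSeries_sub_primeSum_le hk hs

/-- A bound for the growth of `log ‖heckeL k‖` on discs of radius `1 / 8` centred at `c`, beyond
`growthExponent k (c.re - 1)`. -/
noncomputable def growthConst : ℝ := Real.log 2400 + 2 * higherPowerBound + Real.log 288

lemma growthConst_nonneg : 0 ≤ growthConst := by
  have := higherPowerBound_nonneg
  rw [growthConst]
  positivity

/-- The exponent `M` for which `‖heckeL k‖ ≤ exp M * ‖heckeL k c‖` on the disc of radius `1 / 8`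
about a point `c` to the right of, and at distance `x` from, the line `re s = 1`. -/
noncomputable def growthExponent (k : ℤ) (x : ℝ) : ℝ :=
  Real.log |(k : ℝ)| + Real.log (1 / x) + growthConst

lemma growthExponent_pos (hk0 : k ≠ 0) (hk : 4 ∣ k) {x : ℝ} (hx0 : 0 < x) (hx : x ≤ 1) :
    0 < growthExponent k x := by
  have hlog : 0 ≤ Real.log (1 / x) := Real.log_nonneg ((one_le_div hx0).mpr hx)
  rw [growthExponent]
  linarith [one_le_log_abs hk0 hk, growthConst_nonneg]

lemma seven_eighths_le_re {c z : ℂ} (hc : 1 < c.re) (hz : z ∈ closedBall c (1 / 8)) :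
    7 / 8 ≤ z.re := by
  have hre := neg_le_of_abs_le
    ((Complex.abs_re_le_norm (z - c)).trans (mem_closedBall_iff_norm.mp hz))
  rw [Complex.sub_re] at hre
  linarith

lemma norm_heckeL_le_exp_growthExponent_mul (hk0 : k ≠ 0) (hk : 4 ∣ k) {c : ℂ} (hc : 1 < c.re)
    (hc' : c.re ≤ 9 / 8) (him : |c.im| ≤ 1) {z : ℂ} (hz : z ∈ closedBall c (1 / 8)) :
    ‖heckeL k z‖ ≤ Real.exp (growthExponent k (c.re - 1)) * ‖heckeL k c‖ := by
  have hnorm : ‖z‖ ≤ 3 := by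
    have hcn := Complex.norm_le_abs_re_add_abs_im c
    rw [abs_of_pos (by linarith)] at hcn
    linarith [norm_le_norm_add_norm_sub' z c, mem_closedBall_iff_norm.mp hz]
  refine (norm_heckeL_le_of_norm_le_three hk0 (seven_eighths_le_re hc hz) hnorm).trans ?_
  have hc0 : 0 < ‖heckeL k c‖ := norm_pos_iff.mpr (heckeL_ne_zero hk hc)
  have hkpos : 0 < |(k : ℝ)| := by linarith [four_le_abs hk0 hk]
  rw [← Real.log_le_log_iff (by positivity) (by positivity),
    Real.log_mul (Real.exp_ne_zero _) hc0.ne', Real.log_exp, Real.log_mul (by norm_num) hkpos.ne',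
    growthExponent, growthConst]
  linarith [neg_le_of_abs_le (abs_log_norm_heckeL_sub_primeSum_le hk hc),
    neg_primeSum_zero_le k hc,
    le_of_abs_le (abs_primeSum_zero_sub_log_le (σ := c.re) hc (by linarith))]

lemma differentiableOn_heckeL (hk0 : k ≠ 0) {c : ℂ} (hc : 1 < c.re) :
    DifferentiableOn ℂ (heckeL k) (closedBall c (1 / 8)) := fun z hz =>
  (differentiableAt_heckeL hk0
    (by linarith [seven_eighths_le_re hc hz])).differentiableWithinAt

lemma norm_mk_sub_mk (x y t : ℝ) : ‖(⟨x, t⟩ : ℂ) - ⟨y, t⟩‖ = |x - y| := by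
  rw [show (⟨x, t⟩ : ℂ) - ⟨y, t⟩ = (x - y : ℝ) by apply Complex.ext <;> simp, Complex.norm_real,
    Real.norm_eq_abs]

lemma norm_sub_le_norm_sub_of_re_le {ρ : ℂ} {u v : ℝ} (γ : ℝ) (hρ : ρ.re ≤ u) (huv : u ≤ v) :
    ‖(⟨u, γ⟩ : ℂ) - ρ‖ ≤ ‖(⟨v, γ⟩ : ℂ) - ρ‖ := by
  have : 0 ≤ u - ρ.re := sub_nonneg.mpr hρ
  have : 0 ≤ v - ρ.re := sub_nonneg.mpr (hρ.trans huv)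
  simp only [Complex.norm_def, Complex.normSq_apply, Complex.sub_re, Complex.sub_im]
  gcongr

section Landau

variable {u v γ : ℝ}

lemma landau_exponent_le {M : ℝ} (hM : 0 ≤ M) (hu : 1 < u) (huv : u ≤ v) (hv : v ≤ 1 + 1 / 48) :
    2 * M * |u - v| / (1 / 8 / 3 - |u - v|) ≤ 96 * M * (v - 1) := by
  rw [abs_of_nonpos (by linarith), div_le_iff₀ (by linarith)]
  have hMu : M * (v - u) ≤ M * (v - 1) := by gcongr
  have : 0 ≤ M * (v - 1) := mul_nonneg hM (by linarith)
  have hMv : M * (v - 1) * (v - u) ≤ M * (v - 1) * (1 / 48) := by gcongr; linarith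
  linarith

lemma exp_landau_le (hk0 : k ≠ 0) (hk : 4 ∣ k) (hu : 1 < u) (huv : u ≤ v) (hv : v ≤ 1 + 1 / 48) :
    Real.exp (2 * growthExponent k (v - 1) * ‖(⟨u, γ⟩ : ℂ) - ⟨v, γ⟩‖ /
        (1 / 8 / 3 - ‖(⟨u, γ⟩ : ℂ) - ⟨v, γ⟩‖)) ≤
      Real.exp (96 * growthExponent k (v - 1) * (v - 1)) := by
  rw [norm_mk_sub_mk]
  exact Real.exp_le_exp.mpr (landau_exponent_le
    (growthExponent_pos hk0 hk (by linarith) (by linarith)).le hu huv hv)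

lemma mk_mem_ball (hu : 1 < u) (huv : u ≤ v) (hv : v ≤ 1 + 1 / 48) :
    (⟨u, γ⟩ : ℂ) ∈ ball (⟨v, γ⟩ : ℂ) (1 / 8 / 3) := by
  rw [mem_ball_iff_norm, norm_mk_sub_mk, abs_of_nonpos (by linarith)]
  linarith

lemma norm_heckeL_le_exp_mul (hk0 : k ≠ 0) (hk : 4 ∣ k) (hu : 1 < u) (huv : u ≤ v)
    (hv : v ≤ 1 + 1 / 48) (hγ : |γ| ≤ 1) :
    ‖heckeL k ⟨u, γ⟩‖ ≤
      Real.exp (96 * growthExponent k (v - 1) * (v - 1)) * ‖heckeL k ⟨v, γ⟩‖ := by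
  have hv1 : 1 < v := hu.trans_le huv
  refine (norm_le_exp_mul_norm_of_zeros (R := 1 / 8)
    (growthExponent_pos hk0 hk (by linarith) (by linarith)) (mk_mem_ball hu huv hv)
    (differentiableOn_heckeL hk0 hv1) (heckeL_ne_zero hk hv1)
    (fun z hz => norm_heckeL_le_exp_growthExponent_mul hk0 hk hv1 (by dsimp; linarith) hγ hz)
    fun ρ hρ => norm_sub_le_norm_sub_of_re_le γ
      ((re_le_one_of_heckeL_eq_zero hk hρ).trans hu.le) huv).trans ?_
  gcongr ?_ * _
  exact exp_landau_le hk0 hk hu huv hv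

lemma sub_mul_norm_heckeL_le_exp_mul (hk0 : k ≠ 0) (hk : 4 ∣ k) (hu : 1 < u) (huv : u ≤ v)
    (hv : v ≤ 1 + 1 / 48) (hγ : |γ| ≤ 1) {β : ℝ} (hβ : v - β ≤ 1 / 24)
    (h0 : heckeL k ⟨β, γ⟩ = 0) :
    (v - β) * ‖heckeL k ⟨u, γ⟩‖ ≤
      Real.exp (96 * growthExponent k (v - 1) * (v - 1)) * (‖heckeL k ⟨v, γ⟩‖ * (u - β)) := by
  have hv1 : 1 < v := hu.trans_le huv
  have hβ1 : β ≤ 1 := re_le_one_of_heckeL_eq_zero hk h0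
  have hnorm {w : ℝ} (hw : 1 < w) : ‖(⟨w, γ⟩ : ℂ) - ⟨β, γ⟩‖ = w - β := by
    rw [norm_mk_sub_mk, abs_of_nonneg (by linarith)]
  have hlandau := norm_sub_mul_norm_le_of_zeros (R := 1 / 8) (f := heckeL k)
    (growthExponent_pos hk0 hk (by linarith) (by linarith)) (mk_mem_ball hu huv hv)
    (differentiableOn_heckeL hk0 hv1) (heckeL_ne_zero hk hv1)
    (fun z hz => norm_heckeL_le_exp_growthExponent_mul hk0 hk hv1 (by dsimp; linarith) hγ hz)
    (fun ρ hρ => norm_sub_le_norm_sub_of_re_le γ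
      ((re_le_one_of_heckeL_eq_zero hk hρ).trans hu.le) huv)
    (by rw [mem_closedBall_iff_norm', hnorm hv1]; linarith) h0
  rw [hnorm hv1, hnorm hu] at hlandau
  refine hlandau.trans ?_
  have : 0 ≤ u - β := by linarith
  gcongr ?_ * _
  exact exp_landau_le hk0 hk hu huv hv

lemma primeSum_sub_le (hk0 : k ≠ 0) (hk : 4 ∣ k) (hu : 1 < u) (huv : u ≤ v)
    (hv : v ≤ 1 + 1 / 48) (hγ : |γ| ≤ 1) :
    primeSum k ⟨u, γ⟩ - primeSum k ⟨v, γ⟩ ≤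
      96 * growthExponent k (v - 1) * (v - 1) + 2 * higherPowerBound := by
  have hv1 : 1 < v := hu.trans_le huv
  have hFu : 0 < ‖heckeL k ⟨u, γ⟩‖ := norm_pos_iff.mpr (heckeL_ne_zero hk hu)
  have hFv : 0 < ‖heckeL k ⟨v, γ⟩‖ := norm_pos_iff.mpr (heckeL_ne_zero hk hv1)
  have hlog := Real.log_le_log hFu (norm_heckeL_le_exp_mul hk0 hk hu huv hv hγ)
  rw [Real.log_mul (Real.exp_ne_zero _) hFv.ne', Real.log_exp] at hlog
  linarith [neg_le_of_abs_le (abs_log_norm_heckeL_sub_primeSum_le hk (s := ⟨u, γ⟩) hu),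
    le_of_abs_le (abs_log_norm_heckeL_sub_primeSum_le hk (s := ⟨v, γ⟩) hv1)]

lemma primeSum_sub_le_of_zero (hk0 : k ≠ 0) (hk : 4 ∣ k) (hu : 1 < u) (huv : u ≤ v)
    (hv : v ≤ 1 + 1 / 48) (hγ : |γ| ≤ 1) {β : ℝ} (hβ : v - β ≤ 1 / 24)
    (h0 : heckeL k ⟨β, γ⟩ = 0) :
    primeSum k ⟨u, γ⟩ - primeSum k ⟨v, γ⟩ ≤
      96 * growthExponent k (v - 1) * (v - 1) + 2 * higherPowerBound +
        Real.log ((u - β) / (v - β)) := by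
  have hv1 : 1 < v := hu.trans_le huv
  have hβ1 : β ≤ 1 := re_le_one_of_heckeL_eq_zero hk h0
  have huβ : 0 < u - β := by linarith
  have hvβ : 0 < v - β := by linarith
  have hFu : 0 < ‖heckeL k ⟨u, γ⟩‖ := norm_pos_iff.mpr (heckeL_ne_zero hk hu)
  have hFv : 0 < ‖heckeL k ⟨v, γ⟩‖ := norm_pos_iff.mpr (heckeL_ne_zero hk hv1)
  have hlog := Real.log_le_log (by positivity)
    (sub_mul_norm_heckeL_le_exp_mul hk0 hk hu huv hv hγ hβ h0)
  rw [Real.log_mul hvβ.ne' hFu.ne', Real.log_mul (Real.exp_ne_zero _) (by positivity),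
    Real.log_mul hFv.ne' huβ.ne', Real.log_exp] at hlog
  rw [Real.log_div huβ.ne' hvβ.ne']
  linarith [neg_le_of_abs_le (abs_log_norm_heckeL_sub_primeSum_le hk (s := ⟨u, γ⟩) hu),
    le_of_abs_le (abs_log_norm_heckeL_sub_primeSum_le hk (s := ⟨v, γ⟩) hv1)]

lemma growthExponent_mul_self_le {x : ℝ} (hx0 : 0 < x) (hx : x ≤ 1 / 48)
    (hk : Real.log |(k : ℝ)| * x ≤ 1 / 24) :
    96 * growthExponent k x * x ≤ 100 + 2 * growthConst := by
  have hlog : Real.log (1 / x) * x ≤ 1 / x * x := by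
    gcongr
    linarith [Real.log_le_sub_one_of_pos (one_div_pos.mpr hx0)]
  rw [one_div_mul_cancel hx0.ne'] at hlog
  have hconst : growthConst * x ≤ growthConst * (1 / 48) := by
    have := growthConst_nonneg
    gcongr
  rw [growthExponent]
  linarith

/-- The bounded error term in `three_four_one_of_zero`. -/
noncomputable def repulsionConst : ℝ :=
  500 + 10 * growthConst + 16 * higherPowerBound + 6 * Real.log 288

lemma three_four_one_of_zero (hk0 : k ≠ 0) (hk : 4 ∣ k) (hu : 1 < u) (huv : u ≤ v)
    (hv : (v - 1) * Real.log |(k : ℝ)| = 1 / 48) (hγ : |γ| ≤ 1 / 2) {β : ℝ} (hβ : v - β ≤ 1 / 24)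
    (h0 : heckeL k ⟨β, γ⟩ = 0) :
    0 ≤ 3 * Real.log ((v - 1) / (u - 1)) + 4 * Real.log ((u - β) / (v - β)) + repulsionConst := by
  have hlog := one_le_log_abs hk0 hk
  have hu0 : 0 < u - 1 := sub_pos.mpr hu
  have hv0 : 0 < v - 1 := hu0.trans_le (by linarith)
  have hv48 : v ≤ 1 + 1 / 48 := by nlinarith
  have hlog2 : Real.log |((2 * k : ℤ) : ℝ)| ≤ 2 * Real.log |(k : ℝ)| := by
    have habs := four_le_abs hk0 hk
    push_cast
    rw [abs_mul, abs_two, Real.log_mul (by norm_num) (by positivity)]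
    linarith [Real.log_le_log (by norm_num) (show (2 : ℝ) ≤ |(k : ℝ)| by linarith)]
  have hk1 := growthExponent_mul_self_le (k := k) hv0 (by linarith) (by linarith)
  have hk2 := growthExponent_mul_self_le (k := 2 * k) hv0 (by linarith) (by nlinarith)
  have hγ2 : |2 * γ| ≤ 1 := by
    rw [abs_mul, abs_two]
    linarith
  have hsum0 : primeSum 0 u - primeSum 0 v ≤
      Real.log ((v - 1) / (u - 1)) + 2 * (higherPowerBound + Real.log 288) := by
    have hu' := le_of_abs_le (abs_primeSum_zero_sub_log_le hu (by linarith))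
    have hv' := neg_le_of_abs_le (abs_primeSum_zero_sub_log_le (hu.trans_le huv) (by linarith))
    rw [one_div, Real.log_inv] at hu' hv'
    rw [Real.log_div hv0.ne' hu0.ne']
    linarith
  rw [repulsionConst]
  linarith [three_four_one k γ hu huv,
    primeSum_sub_le_of_zero hk0 hk hu huv hv48 (by linarith) hβ h0,
    primeSum_sub_le (mul_ne_zero two_ne_zero hk0) (hk.mul_left 2) hu huv hv48 hγ2]

lemma neg_log_le_of_zero (hk0 : k ≠ 0) (hk : 4 ∣ k) {x t : ℝ}
    (hx : x * Real.log |(k : ℝ)| = 1 / 48)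
    (ht0 : 0 < t) (ht : t ≤ 1) {s : ℂ} (him : |s.im| ≤ 1 / 2) (hre : 1 - t * x ≤ s.re)
    (h0 : heckeL k s = 0) : -Real.log t ≤ 4 * Real.log 2 + repulsionConst := by
  have hlog := one_le_log_abs hk0 hk
  have hx0 : 0 < x := by
    refine pos_of_mul_pos_left ?_ (zero_le_one.trans hlog)
    rw [hx]
    norm_num
  have hx48 : x ≤ 1 / 48 := by nlinarith
  have htx0 : 0 < t * x := by positivity
  have htx : t * x ≤ x := mul_le_of_le_one_left hx0.le ht
  have hs1 : s.re ≤ 1 := re_le_one_of_heckeL_eq_zero hk h0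
  have hthree := three_four_one_of_zero (u := 1 + t * x) (v := 1 + x) hk0 hk (by linarith)
    (by linarith) (by linarith) him (by linarith) h0
  have hpole : Real.log ((1 + x - 1) / (1 + t * x - 1)) = -Real.log t := by
    rw [add_sub_cancel_left, add_sub_cancel_left, div_mul_cancel_right₀ hx0.ne', Real.log_inv]
  have hzero : Real.log ((1 + t * x - s.re) / (1 + x - s.re)) ≤ Real.log 2 + Real.log t := by
    rw [← Real.log_mul two_ne_zero ht0.ne']
    refine Real.log_le_log (div_pos (by linarith) (by linarith))
      ((div_le_iff₀ (by linarith)).mpr ?_)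
    have : t * x ≤ t * (1 + x - s.re) := by gcongr; linarith
    linarith
  linarith

end Landau

theorem exists_zeroFreeRegion : ∃ κ : ℝ, 0 < κ ∧ κ ≤ 1 / 48 ∧ ∀ k : ℤ, k ≠ 0 → 4 ∣ k → ∀ s : ℂ,
    |s.im| ≤ 1 / 2 → 1 - κ / Real.log |(k : ℝ)| ≤ s.re → heckeL k s ≠ 0 := by
  set W : ℝ := 4 * Real.log 2 + repulsionConst + 1 with hW
  have hexp : Real.exp (-W) ≤ 1 := Real.exp_le_one_iff.mpr (by
    have := growthConst_nonneg
    have := higherPowerBound_nonneg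
    rw [hW, repulsionConst, neg_nonpos]
    positivity)
  refine ⟨Real.exp (-W) / 48, by positivity, by linarith, fun k hk0 hk s him hre h0 => ?_⟩
  have hlog := one_le_log_abs hk0 hk
  have hbound := neg_log_le_of_zero (x := 1 / (48 * Real.log |(k : ℝ)|)) hk0 hk (by field_simp)
    (Real.exp_pos (-W)) hexp him (by rwa [mul_one_div, ← div_div]) h0
  rw [Real.log_exp] at hbound
  linarith

lemma log_one_div_div_sq {a b : ℝ} (ha : a ≠ 0) (hb : b ≠ 0) :
    Real.log (1 / (a / b ^ 2)) = Real.log (1 / a) + 2 * Real.log b := by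
  rw [one_div_div, Real.log_div (by positivity) ha, Real.log_pow, one_div, Real.log_inv]
  push_cast
  ring

lemma growthExponent_div_sq_le (hk0 : k ≠ 0) (hk : 4 ∣ k) {a : ℝ} (ha0 : 0 < a) (ha : a ≤ 1) :
    growthExponent k (a / Real.log |(k : ℝ)| ^ 2) ≤
      (3 + Real.log (1 / a) + growthConst) * Real.log |(k : ℝ)| := by
  have hΛ := one_le_log_abs hk0 hk
  have hloga : 0 ≤ Real.log (1 / a) := Real.log_nonneg ((one_le_div ha0).mpr ha)
  have hloglog := Real.log_le_sub_one_of_pos (zero_lt_one.trans_le hΛ)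
  rw [growthExponent, log_one_div_div_sq ha0.ne' (by positivity)]
  nlinarith [growthConst_nonneg]

lemma abs_log_norm_heckeL_sub_le_of_ne_zero (hk0 : k ≠ 0) (hk : 4 ∣ k) {x r : ℝ} (hxr : x < r)
    (hr : r ≤ 1 / 8) (hne : ∀ z ∈ ball ((1 + x : ℝ) : ℂ) r, heckeL k z ≠ 0) {σ : ℝ} (hσ : 1 < σ)
    (hσx : σ ≤ 1 + x) :
    |Real.log ‖heckeL k σ‖ - Real.log ‖heckeL k (1 + x : ℝ)‖| ≤
      2 * growthExponent k x * (1 + x - σ) / (r - (1 + x - σ)) := by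
  have hball {z : ℂ} (hz : z ∈ ball ((1 + x : ℝ) : ℂ) r) :
      z ∈ closedBall ((1 + x : ℝ) : ℂ) (1 / 8) :=
    closedBall_subset_closedBall hr (ball_subset_closedBall hz)
  have hc : 1 < ((1 + x : ℝ) : ℂ).re := by
    rw [Complex.ofReal_re]
    linarith
  have hgrowth : ∀ z ∈ ball ((1 + x : ℝ) : ℂ) r, ‖heckeL k z‖ ≤
      Real.exp (growthExponent k x) * ‖heckeL k ((1 + x : ℝ) : ℂ)‖ := fun z hz => by
    have := norm_heckeL_le_exp_growthExponent_mul hk0 hk hc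
      (by rw [Complex.ofReal_re]; linarith) (by simp) (hball hz)
    rwa [Complex.ofReal_re, add_sub_cancel_left] at this
  have hdist : ‖(σ : ℂ) - (1 + x : ℝ)‖ = 1 + x - σ := by
    rw [← Complex.ofReal_sub, Complex.norm_real, Real.norm_eq_abs, abs_of_nonpos (by linarith),
      neg_sub]
  have hbound := abs_log_norm_sub_log_norm_le (p := (σ : ℂ))
    (growthExponent_pos hk0 hk (by linarith) (by linarith))
    ((differentiableOn_heckeL hk0 hc).mono fun z hz => hball hz) hne hgrowth
    (by rw [mem_ball_iff_norm, hdist]; linarith)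
  rwa [hdist] at hbound

lemma abs_log_norm_heckeL_sub_le (hk0 : k ≠ 0) (hk : 4 ∣ k) {κ : ℝ} (hκ0 : 0 < κ)
    (hκ : κ ≤ 1 / 48)
    (hzero : ∀ s : ℂ, |s.im| ≤ 1 / 2 → 1 - κ / Real.log |(k : ℝ)| ≤ s.re → heckeL k s ≠ 0)
    {σ : ℝ} (hσ : 1 < σ) (hσ' : σ ≤ 1 + κ / 4 / Real.log |(k : ℝ)| ^ 2) :
    |Real.log ‖heckeL k σ‖ -
        Real.log ‖heckeL k (1 + κ / 4 / Real.log |(k : ℝ)| ^ 2 : ℝ)‖| ≤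
      3 + Real.log (1 / (κ / 4)) + growthConst := by
  have hΛ := one_le_log_abs hk0 hk
  have hM := growthExponent_div_sq_le hk0 hk (a := κ / 4) (by positivity) (by linarith)
  set Λ := Real.log |(k : ℝ)|
  set x := κ / 4 / Λ ^ 2 with hx
  set D := 3 + Real.log (1 / (κ / 4)) + growthConst
  have hx0 : 0 < x := by positivity
  have hxr : x ≤ κ / Λ / 4 := by
    rw [hx, div_right_comm]
    gcongr
    nlinarith
  have hr : κ / Λ ≤ 1 / 48 := (div_le_self hκ0.le hΛ).trans hκ
  have hne : ∀ z ∈ ball ((1 + x : ℝ) : ℂ) (κ / Λ), heckeL k z ≠ 0 := fun z hz => by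
    rw [mem_ball_iff_norm] at hz
    have hre := neg_le_of_abs_le ((Complex.abs_re_le_norm _).trans hz.le)
    have him := (Complex.abs_im_le_norm _).trans hz.le
    rw [Complex.sub_re, Complex.ofReal_re] at hre
    rw [Complex.sub_im, Complex.ofReal_im, sub_zero] at him
    exact hzero z (by linarith) (by linarith)
  have hD : 0 ≤ D := by nlinarith [growthExponent_pos hk0 hk hx0 (by linarith)]
  refine (abs_log_norm_heckeL_sub_le_of_ne_zero hk0 hk (by linarith) (by linarith) hne hσ
    hσ').trans ((div_le_iff₀ (by linarith)).mpr ?_)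
  calc 2 * growthExponent k x * (1 + x - σ) ≤ 2 * (D * Λ) * x := by gcongr; linarith
    _ = D * (κ / Λ / 2) := by
      rw [hx]
      field_simp
      ring
    _ ≤ D * (κ / Λ - (1 + x - σ)) := by gcongr; linarith

theorem exists_abs_primeSum_sub_le : ∃ C a : ℝ, 0 ≤ C ∧ 0 < a ∧ a ≤ 1 / 8 ∧ ∀ k : ℤ, k ≠ 0 →
    4 ∣ k → ∀ σ : ℝ, 1 < σ → σ ≤ 1 + a / Real.log |(k : ℝ)| ^ 2 →
    |primeSum k σ - primeSum k (1 + a / Real.log |(k : ℝ)| ^ 2 : ℝ)| ≤ C := by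
  obtain ⟨κ, hκ0, hκ, hzero⟩ := exists_zeroFreeRegion
  have hC : 0 ≤ 3 + Real.log (1 / (κ / 4)) + growthConst + 2 * higherPowerBound := by
    have := growthConst_nonneg
    have := higherPowerBound_nonneg
    have : 0 ≤ Real.log (1 / (κ / 4)) :=
      Real.log_nonneg ((one_le_div (by positivity)).mpr (by linarith))
    positivity
  refine ⟨_, κ / 4, hC, by positivity, by linarith, fun k hk0 hk σ hσ hσ' => ?_⟩
  have hlog {τ : ℝ} (hτ : 1 < τ) :=
    abs_le.mp (abs_log_norm_heckeL_sub_primeSum_le hk (s := τ) (by rwa [Complex.ofReal_re]))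
  have hdiff := abs_le.mp (abs_log_norm_heckeL_sub_le hk0 hk hκ0 hκ (hzero k hk0 hk) hσ hσ')
  exact abs_le.mpr ⟨by linarith [hlog hσ, hlog (hσ.trans_le hσ')],
    by linarith [hlog hσ, hlog (hσ.trans_le hσ')]⟩

end ZeroFree

/-! ### The Fourier series of `|cos|` -/

section AbsCos

open Real

lemma abs_cos_periodic : Function.Periodic (fun x : ℝ => ((|cos x| : ℝ) : ℂ)) π := fun x => by
  simp only [cos_add_pi, abs_neg]

/-- The `π`-periodic function `|cos|`, as a continuous function on the circle `ℝ / πℤ`. -/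
noncomputable def absCosCircle : C(AddCircle π, ℂ) where
  toFun := abs_cos_periodic.lift
  continuous_toFun := continuous_quot_lift _ (by fun_prop)

lemma absCosCircle_coe (x : ℝ) : absCosCircle (x : AddCircle π) = ((|cos x| : ℝ) : ℂ) := rfl

/-- The Fourier coefficients of `|cos|` with respect to the characters `x ↦ exp (2 i n x)`. -/
noncomputable def absCosCoeff (n : ℤ) : ℝ := 2 * cos (n * π) / (π * (1 - 4 * (n : ℝ) ^ 2))

instance fact_pi_pos : Fact (0 < π) := ⟨pi_pos⟩

lemma one_sub_four_mul_sq_ne_zero (n : ℤ) : 1 - 4 * (n : ℂ) ^ 2 ≠ 0 := by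
  norm_cast
  lia

lemma hasDerivAt_exp_mul_cos_primitive (n : ℤ) (x : ℝ) :
    HasDerivAt (fun x : ℝ => Complex.exp (-2 * n * Complex.I * x) *
        (Complex.sin x - 2 * n * Complex.I * Complex.cos x) / (1 - 4 * (n : ℂ) ^ 2))
      (Complex.exp (-2 * n * Complex.I * x) * Complex.cos x) x := by
  have hexp := ((hasDerivAt_id (x : ℂ)).const_mul (-2 * n * Complex.I)).cexp
  have htrig := (Complex.hasDerivAt_sin x).sub
    ((Complex.hasDerivAt_cos x).const_mul (2 * n * Complex.I))
  refine (((hexp.mul htrig).div_const (1 - 4 * (n : ℂ) ^ 2)).congr_deriv ?_).comp_ofReal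
  rw [div_eq_iff (one_sub_four_mul_sq_ne_zero n)]
  simp only [Pi.sub_apply, id_eq]
  linear_combination
    (4 * (n : ℂ) ^ 2 * Complex.exp (-2 * n * Complex.I * x) * Complex.cos x) * Complex.I_sq

lemma integral_exp_mul_cos (n : ℤ) :
    ∫ x in -(π / 2)..π / 2, Complex.exp (-2 * n * Complex.I * x) * Complex.cos x =
      2 * Complex.cos (n * π) / (1 - 4 * (n : ℂ) ^ 2) := by
  rw [intervalIntegral.integral_eq_sub_of_hasDerivAt
    (fun x _ => hasDerivAt_exp_mul_cos_primitive n x)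
    (Continuous.intervalIntegrable (by fun_prop) _ _)]
  push_cast
  rw [Complex.sin_neg, Complex.cos_neg, Complex.sin_pi_div_two, Complex.cos_pi_div_two,
    show -2 * (n : ℂ) * Complex.I * (π / 2) = -(n * π) * Complex.I by ring,
    show -2 * (n : ℂ) * Complex.I * -(π / 2) = n * π * Complex.I by ring, Complex.cos]
  ring

lemma fourierCoeff_absCosCircle (n : ℤ) : fourierCoeff absCosCircle n = (absCosCoeff n : ℂ) := by
  have hintegrand : ∀ x ∈ Set.uIcc (-(π / 2)) (π / 2),
      fourier (-n) (x : AddCircle π) • absCosCircle (x : AddCircle π) =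
        Complex.exp (-2 * n * Complex.I * x) * Complex.cos x := fun x hx => by
    rw [Set.uIcc_of_le (by linarith [pi_pos])] at hx
    rw [absCosCircle_coe, fourier_coe_apply, smul_eq_mul,
      abs_of_nonneg (cos_nonneg_of_mem_Icc hx), Complex.ofReal_cos]
    congr 2
    push_cast
    field_simp
  rw [fourierCoeff_eq_intervalIntegral _ n (-(π / 2)),
    show -(π / 2) + π = π / 2 by ring, intervalIntegral.integral_congr hintegrand,
    integral_exp_mul_cos, Complex.real_smul, absCosCoeff]
  push_cast
  field_simp

lemma absCosCoeff_zero : absCosCoeff 0 = 2 / π := by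
  simp [absCosCoeff]

lemma abs_absCosCoeff_le {n : ℤ} (hn : n ≠ 0) : |absCosCoeff n| ≤ |(n : ℝ)| ^ (-2 : ℝ) := by
  have hn1 : (1 : ℝ) ≤ (n : ℝ) ^ 2 :=
    (one_le_sq_iff_one_le_abs _).mpr (by exact_mod_cast Int.one_le_abs hn)
  have hnum : |2 * cos (n * π)| ≤ 2 := by
    rw [abs_mul, abs_two]
    linarith [abs_cos_le_one (n * π)]
  have hden : |π * (1 - 4 * (n : ℝ) ^ 2)| = π * (4 * (n : ℝ) ^ 2 - 1) := by
    rw [abs_mul, abs_of_pos pi_pos, abs_of_neg (by linarith), neg_sub]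
  rw [absCosCoeff, abs_div, hden, rpow_neg (abs_nonneg _), rpow_two, sq_abs, inv_eq_one_div]
  rw [div_le_div_iff₀ (by have := pi_pos; nlinarith) (by positivity)]
  nlinarith [pi_gt_three]

lemma summable_abs_absCosCoeff : Summable fun n : ℤ => |absCosCoeff n| := by
  refine Summable.of_norm_bounded_eventually (summable_abs_int_rpow (b := 2) (by norm_num)) ?_
  filter_upwards [(Set.finite_singleton 0).compl_mem_cofinite] with n hn
  rw [norm_eq_abs, abs_abs]
  exact abs_absCosCoeff_le hn

lemma hasSum_absCosCoeff_mul_cos (x : ℝ) :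
    HasSum (fun n : ℤ => absCosCoeff n * cos (2 * n * x)) |cos x| := by
  have hs : Summable (fourierCoeff absCosCircle) :=
    Summable.of_norm (summable_abs_absCosCoeff.congr fun n => by
      rw [fourierCoeff_absCosCircle, Complex.norm_real, norm_eq_abs])
  refine (Complex.hasSum_re (has_pointwise_sum_fourier_series_of_summable hs x)).congr_fun
    fun n => ?_
  have harg : 2 * (π : ℂ) * Complex.I * n * x / π = ((2 * n * x : ℝ) : ℂ) * Complex.I := by
    push_cast
    field_simp
  rw [fourierCoeff_absCosCircle, fourier_coe_apply, smul_eq_mul, Complex.re_ofReal_mul, harg,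
    Complex.exp_ofReal_mul_I_re]

end AbsCos

/-! ### The average of `|primeCoeff|` over the primes -/

section PrimeAverage

variable {k n : ℤ} {a : ℝ}

lemma hasSum_abs_primeCoeff (k : ℤ) (p : Nat.Primes) :
    HasSum (fun n : ℤ => absCosCoeff n * primeCoeff (2 * n * k) p) |primeCoeff k p| := by
  rw [primeCoeff, abs_mul, abs_of_nonneg (one_add_χ₄_nonneg _)]
  refine ((hasSum_absCosCoeff_mul_cos _).mul_left _).congr_fun fun n => ?_
  rw [primeCoeff, ← mul_assoc (2 * (n : ℝ))]
  push_cast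
  ring

lemma tsum_abs_primeCoeff_mul_sub (k : ℤ) {u v : ℝ} (hu : 1 < u) (huv : u ≤ v) :
    ∑' p : Nat.Primes, |primeCoeff k p| * ((p : ℝ) ^ (-u) - (p : ℝ) ^ (-v)) =
      ∑' n : ℤ, absCosCoeff n * (primeSum (2 * n * k) u - primeSum (2 * n * k) v) := by
  have hd (p : Nat.Primes) := rpow_neg_sub_rpow_neg_nonneg p huv
  have hsum (j : ℤ) : HasSum
      (fun p : Nat.Primes => primeCoeff j p * ((p : ℝ) ^ (-u) - (p : ℝ) ^ (-v)))
      (primeSum j u - primeSum j v) := by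
    simp only [primeSum_ofReal, mul_sub]
    exact (summable_primeCoeff_mul_rpow j hu).hasSum.sub
      (summable_primeCoeff_mul_rpow j (hu.trans_le huv)).hasSum
  have hdouble : Summable (Function.uncurry fun (n : ℤ) (p : Nat.Primes) =>
      absCosCoeff n * (primeCoeff (2 * n * k) p * ((p : ℝ) ^ (-u) - (p : ℝ) ^ (-v)))) := by
    refine Summable.of_norm_bounded (summable_abs_absCosCoeff.mul_of_nonneg (hsum 0).summable
      (fun n => abs_nonneg _) fun p => mul_nonneg (primeCoeff_zero_nonneg p) (hd p)) ?_
    rintro ⟨n, p⟩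
    rw [Function.uncurry_apply_pair, norm_mul, norm_mul, Real.norm_of_nonneg (hd p)]
    exact mul_le_mul_of_nonneg_left (mul_le_mul_of_nonneg_right (abs_primeCoeff_le p _) (hd p))
      (abs_nonneg _)
  calc _ = ∑' (p : Nat.Primes) (n : ℤ),
        absCosCoeff n * (primeCoeff (2 * n * k) p * ((p : ℝ) ^ (-u) - (p : ℝ) ^ (-v))) :=
        tsum_congr fun p => by
          simp only [← mul_assoc]
          rw [tsum_mul_right, (hasSum_abs_primeCoeff k p).tsum_eq]
    _ = _ := hdouble.tsum_comm
    _ = _ := tsum_congr fun n => by rw [tsum_mul_left, (hsum _).tsum_eq]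

lemma tsum_absCosCoeff_mul_le {f : ℤ → ℝ} {B : ℝ}
    (hf : ∀ n ≠ 0, |f n| ≤ B * |(n : ℝ)| ^ (1 / 2 : ℝ)) :
    ∑' n, absCosCoeff n * f n ≤ 2 / Real.pi * f 0 + ∑' n : ℤ, B * |(n : ℝ)| ^ (-(3 / 2) : ℝ) := by
  have hterm (n : ℤ) (hn : n ≠ 0) : |absCosCoeff n * f n| ≤ B * |(n : ℝ)| ^ (-(3 / 2) : ℝ) := by
    have hpos : 0 < |(n : ℝ)| := abs_pos.mpr (by exact_mod_cast hn)
    calc _ = |absCosCoeff n| * |f n| := abs_mul _ _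
      _ ≤ |(n : ℝ)| ^ (-2 : ℝ) * (B * |(n : ℝ)| ^ (1 / 2 : ℝ)) := by
        gcongr
        exacts [abs_absCosCoeff_le hn, hf n hn]
      _ = B * |(n : ℝ)| ^ (-(3 / 2) : ℝ) := by
        rw [mul_left_comm, ← Real.rpow_add hpos]
        norm_num
  have hmajorant : Summable fun n : ℤ => B * |(n : ℝ)| ^ (-(3 / 2) : ℝ) :=
    (Real.summable_abs_int_rpow (by norm_num)).mul_left B
  have hsum : Summable fun n => absCosCoeff n * f n := by
    refine Summable.of_norm_bounded_eventually hmajorant ?_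
    filter_upwards [(Set.finite_singleton 0).compl_mem_cofinite] with n hn
    exact hterm n hn
  rw [hsum.tsum_eq_add_tsum_ite 0, absCosCoeff_zero]
  gcongr with n
  · exact (hasSum_ite_sub_hasSum hsum.hasSum 0).summable
  · split_ifs with hn
    · simp [hn]
    · exact (le_abs_self _).trans (hterm n hn)

lemma log_log_abs_div_le (hk0 : k ≠ 0) (hk : 4 ∣ k) (hn : n ≠ 0) :
    Real.log (Real.log |((2 * n * k : ℤ) : ℝ)| / Real.log |(k : ℝ)|) ≤
      Real.log 2 + Real.log |(n : ℝ)| := by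
  have hΛ := one_le_log_abs hk0 hk
  have := abs_pos.mpr (Int.cast_ne_zero (α := ℝ).mpr hk0)
  have hn1 : (1 : ℝ) ≤ |(n : ℝ)| := by exact_mod_cast Int.one_le_abs hn
  have hlogn := Real.log_nonneg hn1
  have hlog2 := Real.log_nonneg one_le_two
  push_cast
  rw [abs_mul, abs_mul, abs_two, Real.log_mul (by positivity) (by positivity),
    Real.log_mul (by positivity) (by positivity)]
  refine (Real.log_le_sub_one_of_pos (by positivity)).trans ?_
  rw [sub_le_iff_le_add, div_le_iff₀ (by linarith)]
  nlinarith

lemma primeSum_zero_sub_le (ha0 : 0 < a) (ha : a ≤ 1 / 8) {L Λ : ℝ} (hΛ : 1 ≤ Λ) (hL : 1 ≤ L) :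
    primeSum 0 (1 + a / L ^ 2 : ℝ) - primeSum 0 (1 + a / Λ ^ 2 : ℝ) ≤
      2 * (higherPowerBound + Real.log 288) + 2 * Real.log (L / Λ) := by
  have hpole {M : ℝ} (hM : 1 ≤ M) : |primeSum 0 (1 + a / M ^ 2 : ℝ) -
      (Real.log (1 / a) + 2 * Real.log M)| ≤ higherPowerBound + Real.log 288 := by
    have hpos : 0 < a / M ^ 2 := by positivity
    have hle : a / M ^ 2 ≤ a := div_le_self ha0.le (one_le_pow₀ hM)
    have := abs_primeSum_zero_sub_log_le (σ := 1 + a / M ^ 2) (by linarith) (by linarith)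
    rwa [add_sub_cancel_left, log_one_div_div_sq ha0.ne' (by positivity)] at this
  rw [Real.log_div (by positivity) (by positivity)]
  linarith [abs_le.mp (hpole hL), abs_le.mp (hpole hΛ)]

theorem exists_abs_primeSum_sub_le_rpow : ∃ B a : ℝ, 0 < a ∧ a ≤ 1 / 8 ∧
    ∀ k : ℤ, k ≠ 0 → 4 ∣ k → ∀ σ : ℝ, 1 < σ → σ ≤ 1 + a / Real.log |(k : ℝ)| ^ 2 →
    ∀ n : ℤ, n ≠ 0 → |primeSum (2 * n * k) σ -
      primeSum (2 * n * k) (1 + a / Real.log |(k : ℝ)| ^ 2 : ℝ)| ≤ B * |(n : ℝ)| ^ (1 / 2 : ℝ) := by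
  obtain ⟨C, a, hC, ha0, ha, hshort⟩ := exists_abs_primeSum_sub_le
  set c := higherPowerBound + Real.log 288
  have hc0 : 0 ≤ c := add_nonneg higherPowerBound_nonneg (Real.log_nonneg (by norm_num))
  refine ⟨C + 2 * c + 6, a, ha0, ha, fun k hk0 hk σ hσ hσk n hn => ?_⟩
  have hn1 : (1 : ℝ) ≤ |(n : ℝ)| := by exact_mod_cast Int.one_le_abs hn
  suffices |primeSum (2 * n * k) σ - primeSum (2 * n * k) (1 + a / Real.log |(k : ℝ)| ^ 2 : ℝ)| ≤
      C + (2 * c + 2 * (Real.log 2 + Real.log |(n : ℝ)|)) by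
    have hlogn := Real.log_le_rpow_div (abs_nonneg (n : ℝ)) (one_half_pos (α := ℝ))
    nlinarith [Real.one_le_rpow hn1 (by norm_num : (0 : ℝ) ≤ 1 / 2), Real.log_two_lt_d9]
  have hK0 : 2 * n * k ≠ 0 := mul_ne_zero (mul_ne_zero two_ne_zero hn) hk0
  have hΛ := one_le_log_abs hk0 hk
  have hL := one_le_log_abs hK0 (hk.mul_left _)
  have hshortK := hshort _ hK0 (hk.mul_left _) σ hσ
  set L := Real.log |((2 * n * k : ℤ) : ℝ)|
  set Λ := Real.log |(k : ℝ)|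
  have hgap : primeSum 0 (1 + a / L ^ 2 : ℝ) - primeSum 0 (1 + a / Λ ^ 2 : ℝ) ≤
      2 * c + 2 * (Real.log 2 + Real.log |(n : ℝ)|) := by
    linarith [primeSum_zero_sub_le ha0 ha hΛ hL, log_log_abs_div_le hk0 hk hn]
  have hΛL : Λ ≤ L := Real.log_le_log (by linarith [four_le_abs hk0 hk]) (by
    push_cast
    rw [abs_mul, abs_mul, abs_two]
    nlinarith [abs_nonneg (k : ℝ)])
  have hK1 : 1 < 1 + a / L ^ 2 := lt_add_of_pos_right 1 (by positivity)
  have hKk : 1 + a / L ^ 2 ≤ 1 + a / Λ ^ 2 := by gcongr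
  rcases le_total σ (1 + a / L ^ 2) with h | h
  · have htriangle := abs_sub_le (primeSum (2 * n * k) σ)
      (primeSum (2 * n * k) (1 + a / L ^ 2 : ℝ)) (primeSum (2 * n * k) (1 + a / Λ ^ 2 : ℝ))
    linarith [hshortK h, abs_primeSum_sub_le (2 * n * k) hK1 hKk]
  · linarith [abs_primeSum_sub_le (2 * n * k) hσ hσk,
      (abs_nonneg _).trans (abs_primeSum_sub_le 0 hK1 h)]

theorem exists_tsum_abs_primeCoeff_le : ∃ C a : ℝ, 0 < a ∧ a ≤ 1 / 8 ∧
    ∀ k : ℤ, k ≠ 0 → 4 ∣ k → ∀ σ : ℝ, 1 < σ → σ ≤ 1 + a / Real.log |(k : ℝ)| ^ 2 →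
    ∑' p : Nat.Primes, |primeCoeff k p| * (p : ℝ) ^ (-σ) ≤
      C + 2 / Real.pi * primeSum 0 σ +
        (1 - 2 / Real.pi) * primeSum 0 (1 + a / Real.log |(k : ℝ)| ^ 2 : ℝ) := by
  obtain ⟨B, a, ha0, ha, hterm⟩ := exists_abs_primeSum_sub_le_rpow
  refine ⟨∑' n : ℤ, B * |(n : ℝ)| ^ (-(3 / 2) : ℝ), a, ha0, ha, fun k hk0 hk σ hσ hσk => ?_⟩
  have hmean := tsum_absCosCoeff_mul_le (hterm k hk0 hk σ hσ hσk)
  set y := 1 + a / Real.log |(k : ℝ)| ^ 2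
  have hsum {τ : ℝ} (hτ : 1 < τ) := summable_abs_primeCoeff k hτ
  have htail : ∑' p : Nat.Primes, |primeCoeff k p| * (p : ℝ) ^ (-y) ≤ primeSum 0 y := by
    rw [primeSum_ofReal]
    refine (hsum (hσ.trans_le hσk)).tsum_le_tsum (fun p => ?_)
      (summable_primeCoeff_mul_rpow 0 (hσ.trans_le hσk))
    exact mul_le_mul_of_nonneg_right (abs_primeCoeff_le p k) (by positivity)
  have hsplit := (hsum hσ).tsum_sub (hsum (hσ.trans_le hσk))
  simp only [← mul_sub] at hsplit
  rw [tsum_abs_primeCoeff_mul_sub k hσ hσk] at hsplit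
  simp only [mul_zero, zero_mul] at hmean
  linarith

theorem exists_tsum_norm_angularCoeff_le : ∃ C a : ℝ, 0 < C ∧ 0 < a ∧
    ∀ k : ℤ, k ≠ 0 → 4 ∣ k → ∀ σ : ℝ, 1 < σ → σ ≤ 1 + a / Real.log |(k : ℝ)| ^ 2 →
    ∑' n : ℕ, ‖angularCoeff k n‖ * (n : ℝ) ^ (-σ) ≤
      C / (σ - 1) * ((σ - 1) * Real.log |(k : ℝ)| ^ 2) ^ (1 - 2 / Real.pi) := by
  obtain ⟨C, a, ha0, ha, hC⟩ := exists_tsum_abs_primeCoeff_le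
  set c := higherPowerBound + Real.log 288
  refine ⟨Real.exp (C + c + (1 - 2 / Real.pi) * Real.log (1 / a) + higherPowerBound), a,
    Real.exp_pos _, ha0, fun k hk0 hk σ hσ hσk => ?_⟩
  have hΛ := one_le_log_abs hk0 hk
  have hprimes := hC k hk0 hk σ hσ hσk
  set Λ := Real.log |(k : ℝ)|
  have hx : 0 < σ - 1 := sub_pos.mpr hσ
  have hle : a / Λ ^ 2 ≤ a := div_le_self ha0.le (one_le_pow₀ hΛ)
  have hpi : 0 < 2 / Real.pi := by positivity
  have hpi' : 0 ≤ 1 - 2 / Real.pi := by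
    rw [sub_nonneg, div_le_one Real.pi_pos]
    exact Real.two_le_pi
  have hσ0 := abs_primeSum_zero_sub_log_le hσ (by linarith)
  have hy0 := abs_primeSum_zero_sub_log_le (hσ.trans_le hσk) (by linarith)
  rw [add_sub_cancel_left, log_one_div_div_sq ha0.ne' (by positivity)] at hy0
  rw [one_div, Real.log_inv] at hσ0
  have hσ1 := mul_le_mul_of_nonneg_left (abs_le.mp hσ0).2 hpi.le
  have hy1 := mul_le_mul_of_nonneg_left (abs_le.mp hy0).2 hpi'
  refine (tsum_norm_angularCoeff_le hk hσ).trans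
    ((Real.le_log_iff_exp_le (by positivity)).mp ?_)
  rw [Real.log_mul (by positivity) (by positivity), Real.log_div (by positivity) hx.ne',
    Real.log_exp, Real.log_rpow (by positivity), Real.log_mul hx.ne' (by positivity), Real.log_pow]
  push_cast
  linarith

end PrimeAverage

/-! ### A mean value bound for nonnegative multiplicative functions -/

section HallTenenbaum

open ArithmeticFunction
open scoped ArithmeticFunction.Omega

/-- The weight `Ω (Ω + 1) Λ`, equal to `v (v + 1) log p` at the prime power `p ^ v`. Its convolution
with `g` dominates `g · log` when `g` is multiplicative with `g (p ^ v) ≤ v + 1`. -/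
noncomputable def primePowerWeight : ArithmeticFunction ℝ where
  toFun q := Ω q * (Ω q + 1) * Λ q
  map_zero' := by simp

lemma primePowerWeight_apply (q : ℕ) : primePowerWeight q = Ω q * (Ω q + 1) * Λ q := rfl

lemma primePowerWeight_nonneg (q : ℕ) : 0 ≤ primePowerWeight q := by
  have := vonMangoldt_nonneg (n := q)
  rw [primePowerWeight_apply]
  positivity

lemma primePowerWeight_prime {p : ℕ} (hp : p.Prime) : primePowerWeight p = 2 * Real.log p := by
  rw [primePowerWeight_apply, cardFactors_apply_prime hp, vonMangoldt_apply_prime hp]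
  norm_num

lemma primePowerWeight_prime_pow {p v : ℕ} (hp : p.Prime) :
    primePowerWeight (p ^ v) = v * (v + 1) * Real.log p := by
  rcases eq_or_ne v 0 with rfl | hv
  · simp [primePowerWeight_apply]
  · rw [primePowerWeight_apply, cardFactors_apply_prime_pow hp, vonMangoldt_apply_pow hv,
      vonMangoldt_apply_prime hp]

lemma cardFactors_mul_log_two_le {n : ℕ} (hn : n ≠ 0) : Ω n * Real.log 2 ≤ Real.log n := by
  have hpow : 2 ^ Ω n ≤ n := by
    rw [cardFactors_apply]
    conv_rhs => rw [← Nat.prod_primeFactorsList hn]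
    exact List.pow_card_le_prod _ _ fun p hp => (Nat.prime_of_mem_primeFactorsList hp).two_le
  rw [← Real.log_pow]
  exact Real.log_le_log (by positivity) (by exact_mod_cast hpow)

lemma primePowerWeight_le {q N : ℕ} (hq : q ≤ N) :
    primePowerWeight q ≤ 8 * Real.log N ^ 2 * Λ q := by
  rcases eq_or_ne q 0 with rfl | hq0
  · simp
  have hΩ : (Ω q : ℝ) ≤ 2 * Real.log N := by
    have hlog : Real.log q ≤ Real.log N := Real.log_le_log (by positivity) (by exact_mod_cast hq)
    nlinarith [cardFactors_mul_log_two_le hq0, Real.log_two_gt_d9, (Ω q).cast_nonneg (α := ℝ)]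
  have hΩsq : (Ω q : ℝ) ≤ Ω q * Ω q := by exact_mod_cast Nat.le_mul_self _
  rw [primePowerWeight_apply]
  refine mul_le_mul_of_nonneg_right ?_ vonMangoldt_nonneg
  nlinarith [(Ω q).cast_nonneg (α := ℝ)]

lemma sum_vonMangoldt_not_prime (N : ℕ) :
    ∑ q ∈ Finset.Ioc 0 N with ¬ q.Prime, Λ q = Chebyshev.psi N - Chebyshev.theta N := by
  rw [Chebyshev.psi, Chebyshev.theta, Nat.floor_natCast, eq_sub_iff_add_eq',
    ← Finset.sum_filter_add_sum_filter_not (Finset.Ioc 0 N) Nat.Prime (Λ ·)]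
  congr 1
  exact Finset.sum_congr rfl fun p hp => (vonMangoldt_apply_prime (Finset.mem_filter.mp hp).2).symm

lemma sum_primePowerWeight_prime_le (N : ℕ) :
    ∑ p ∈ Finset.Ioc 0 N with p.Prime, primePowerWeight p ≤ 4 * N := by
  have hlog4 : Real.log 4 ≤ 2 := by
    rw [show (4 : ℝ) = 2 ^ 2 by norm_num, Real.log_pow, Nat.cast_two]
    linarith [Real.log_two_lt_d9]
  calc _ = 2 * Chebyshev.theta N := by
        rw [Chebyshev.theta, Nat.floor_natCast, Finset.mul_sum]
        exact Finset.sum_congr rfl fun p hp => primePowerWeight_prime (Finset.mem_filter.mp hp).2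
    _ ≤ 2 * (Real.log 4 * N) := by gcongr; exact Chebyshev.theta_le_log4_mul_x N.cast_nonneg
    _ ≤ 4 * N := by nlinarith [N.cast_nonneg (α := ℝ)]

lemma log_pow_three_le {x : ℝ} (hx : 1 ≤ x) : Real.log x ^ 3 ≤ 216 * √x := by
  have hx0 : 0 ≤ x := by linarith
  have : 0 ≤ Real.log x := Real.log_nonneg hx
  have hlog : Real.log x ≤ 6 * x ^ (1 / 6 : ℝ) := by
    linarith [Real.log_le_rpow_div hx0 (by norm_num : (0 : ℝ) < 1 / 6)]
  calc _ ≤ (6 * x ^ (1 / 6 : ℝ)) ^ 3 := by gcongr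
    _ = 216 * √x := by
        rw [mul_pow, ← Real.rpow_mul_natCast hx0, Real.sqrt_eq_rpow]
        norm_num

lemma sum_primePowerWeight_not_prime_le (N : ℕ) :
    ∑ q ∈ Finset.Ioc 0 N with ¬ q.Prime, primePowerWeight q ≤ 3456 * N := by
  rcases Nat.eq_zero_or_pos N with rfl | hN
  · simp
  have hN1 : (1 : ℝ) ≤ N := by exact_mod_cast hN
  calc _ ≤ 8 * Real.log N ^ 2 * (Chebyshev.psi N - Chebyshev.theta N) := by
        rw [← sum_vonMangoldt_not_prime, Finset.mul_sum]
        exact Finset.sum_le_sum fun q hq =>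
          primePowerWeight_le (Finset.mem_Ioc.mp (Finset.mem_filter.mp hq).1).2
    _ ≤ 8 * Real.log N ^ 2 * (2 * √N * Real.log N) := by
        gcongr
        exact (le_abs_self _).trans (Chebyshev.abs_psi_sub_theta_le_sqrt_mul_log hN1)
    _ = 16 * Real.log N ^ 3 * √N := by ring
    _ ≤ 16 * (216 * √N) * √N := by gcongr; exact log_pow_three_le hN1
    _ = 3456 * N := by rw [mul_assoc, mul_assoc, Real.mul_self_sqrt N.cast_nonneg]; ring

lemma sum_primePowerWeight_le (N : ℕ) :
    ∑ q ∈ Finset.Ioc 0 N, primePowerWeight q ≤ 3460 * N := by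
  rw [← Finset.sum_filter_add_sum_filter_not _ Nat.Prime]
  linarith [sum_primePowerWeight_prime_le N, sum_primePowerWeight_not_prime_le N]

variable {g : ArithmeticFunction ℝ}

lemma mul_factorization_mul_log_le (hg : g.IsMultiplicative) (hg0 : ∀ n, 0 ≤ g n)
    (hpow : ∀ p e : ℕ, p.Prime → g (p ^ e) ≤ e + 1) {n p : ℕ} (hn : n ≠ 0) (hp : p.Prime) :
    g n * (n.factorization p * Real.log p) ≤
      g (n / p ^ n.factorization p) * primePowerWeight (p ^ n.factorization p) := by
  have hgn : g n = g (p ^ n.factorization p) * g (n / p ^ n.factorization p) := by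
    rw [← hg.map_mul_of_coprime ((Nat.coprime_ordCompl hp hn).pow_left _),
      Nat.ordProj_mul_ordCompl_eq_self]
  have := hg0 (n / p ^ n.factorization p)
  have := Real.log_natCast_nonneg p
  rw [hgn, primePowerWeight_prime_pow hp]
  calc _ = g (p ^ n.factorization p) *
        (g (n / p ^ n.factorization p) * (n.factorization p * Real.log p)) := by ring
    _ ≤ (n.factorization p + 1) *
        (g (n / p ^ n.factorization p) * (n.factorization p * Real.log p)) := by
      gcongr
      exact hpow p _ hp
    _ = _ := by ring

lemma injOn_ordProj (n : ℕ) :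
    Set.InjOn (fun p => p ^ n.factorization p) (n.primeFactors : Set ℕ) := fun p hp q hq hpq => by
  have hp' := Nat.prime_of_mem_primeFactors hp
  have hv : n.factorization p ≠ 0 := Finsupp.mem_support_iff.mp hp
  have hdvd : p ∣ q ^ n.factorization q := (dvd_pow_self p hv).trans (dvd_of_eq hpq)
  exact (Nat.prime_dvd_prime_iff_eq hp' (Nat.prime_of_mem_primeFactors hq)).mp
    (hp'.dvd_of_dvd_pow hdvd)

lemma mul_log_le_mul_primePowerWeight (hg : g.IsMultiplicative) (hg0 : ∀ n, 0 ≤ g n)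
    (hpow : ∀ p e : ℕ, p.Prime → g (p ^ e) ≤ e + 1) (n : ℕ) :
    g n * Real.log n ≤ (g * primePowerWeight) n := by
  rcases eq_or_ne n 0 with rfl | hn
  · simp
  calc g n * Real.log n
      = ∑ p ∈ n.primeFactors, g n * (n.factorization p * Real.log p) := by
        rw [Real.log_nat_eq_sum_factorization, Finsupp.sum, Nat.support_factorization,
          Finset.mul_sum]
    _ ≤ ∑ p ∈ n.primeFactors,
          g (n / p ^ n.factorization p) * primePowerWeight (p ^ n.factorization p) :=
        Finset.sum_le_sum fun p hp =>
          mul_factorization_mul_log_le hg hg0 hpow hn (Nat.prime_of_mem_primeFactors hp)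
    _ = ∑ q ∈ n.primeFactors.image (fun p => p ^ n.factorization p),
          g (n / q) * primePowerWeight q :=
        (Finset.sum_image (f := fun q => g (n / q) * primePowerWeight q) (injOn_ordProj n)).symm
    _ ≤ ∑ q ∈ n.divisors, g (n / q) * primePowerWeight q :=
        Finset.sum_le_sum_of_subset_of_nonneg
          (Finset.image_subset_iff.mpr fun p _ =>
            Nat.mem_divisors.mpr ⟨Nat.ordProj_dvd n p, hn⟩)
          fun q _ _ => mul_nonneg (hg0 _) (primePowerWeight_nonneg q)
    _ = (g * primePowerWeight) n := by
        rw [ArithmeticFunction.mul_apply,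
          Nat.sum_divisorsAntidiagonal' fun d q => g d * primePowerWeight q]

lemma sum_mul_log_le (hg : g.IsMultiplicative) (hg0 : ∀ n, 0 ≤ g n)
    (hpow : ∀ p e : ℕ, p.Prime → g (p ^ e) ≤ e + 1) (N : ℕ) :
    ∑ n ∈ Finset.Ioc 0 N, g n * Real.log n ≤ 3460 * N * ∑ n ∈ Finset.Ioc 0 N, g n / n := by
  calc _ ≤ ∑ n ∈ Finset.Ioc 0 N, (g * primePowerWeight) n :=
        Finset.sum_le_sum fun n _ => mul_log_le_mul_primePowerWeight hg hg0 hpow n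
    _ = ∑ n ∈ Finset.Ioc 0 N, g n * ∑ q ∈ Finset.Ioc 0 (N / n), primePowerWeight q :=
        sum_Ioc_mul_eq_sum_sum _ _ N
    _ ≤ ∑ n ∈ Finset.Ioc 0 N, g n * (3460 * (N / n)) := by
        gcongr with n _
        · exact hg0 n
        · exact (sum_primePowerWeight_le _).trans (by gcongr; exact Nat.cast_div_le)
    _ = _ := by
        rw [Finset.mul_sum]
        exact Finset.sum_congr rfl fun n _ => by ring

lemma log_mul_sum_le (hg : g.IsMultiplicative) (hg0 : ∀ n, 0 ≤ g n)
    (hpow : ∀ p e : ℕ, p.Prime → g (p ^ e) ≤ e + 1) {X : ℝ} (hX : 0 < X) :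
    Real.log X * ∑ n ∈ Finset.Ioc 0 ⌊X⌋₊, g n ≤
      3461 * X * ∑ n ∈ Finset.Ioc 0 ⌊X⌋₊, g n / n := by
  have hterm : ∀ n ∈ Finset.Ioc 0 ⌊X⌋₊, g n * Real.log X ≤ X * (g n / n) + g n * Real.log n :=
    fun n hn => by
      have hn0 : (0 : ℝ) < n := by exact_mod_cast (Finset.mem_Ioc.mp hn).1
      have hlog := Real.log_le_sub_one_of_pos (div_pos hX hn0)
      rw [Real.log_div hX.ne' hn0.ne'] at hlog
      have := mul_le_mul_of_nonneg_left (show Real.log X ≤ X / n + Real.log n by linarith) (hg0 n)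
      linarith [mul_div_left_comm (g n) X (n : ℝ)]
  have hsum := Finset.sum_le_sum hterm
  rw [← Finset.sum_mul, Finset.sum_add_distrib, ← Finset.mul_sum] at hsum
  have hharmonic : 0 ≤ ∑ n ∈ Finset.Ioc 0 ⌊X⌋₊, g n / n :=
    Finset.sum_nonneg fun n _ => div_nonneg (hg0 n) n.cast_nonneg
  have := mul_le_mul_of_nonneg_right (Nat.floor_le hX.le) hharmonic
  linarith [sum_mul_log_le hg hg0 hpow ⌊X⌋₊]

lemma sum_div_le_exp_mul_tsum (hg0 : ∀ n, 0 ≤ g n) {X : ℝ} (hX : 1 < X)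
    (hsum : Summable fun n : ℕ => g n * (n : ℝ) ^ (-(1 + 1 / Real.log X))) :
    ∑ n ∈ Finset.Ioc 0 ⌊X⌋₊, g n / n ≤
      Real.exp 1 * ∑' n : ℕ, g n * (n : ℝ) ^ (-(1 + 1 / Real.log X)) := by
  have hlogX := Real.log_pos hX
  -- Rankin's trick: `n ^ (-1 / log X) ≥ 1 / e` for `n ≤ X`.
  have hterm : ∀ n ∈ Finset.Ioc 0 ⌊X⌋₊,
      g n / n ≤ Real.exp 1 * (g n * (n : ℝ) ^ (-(1 + 1 / Real.log X))) := fun n hn => by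
    obtain ⟨hn0, hnX⟩ := Finset.mem_Ioc.mp hn
    have hn0' : (0 : ℝ) < n := by exact_mod_cast hn0
    have hlog : Real.log n / Real.log X ≤ 1 :=
      div_le_one_of_le₀ (Real.log_le_log hn0' ((Nat.le_floor_iff (by linarith)).mp hnX)) hlogX.le
    rw [mul_left_comm, div_eq_mul_inv]
    refine mul_le_mul_of_nonneg_left ?_ (hg0 n)
    rw [neg_add, Real.rpow_add hn0', Real.rpow_neg_one, mul_left_comm]
    refine le_mul_of_one_le_right (by positivity) ?_
    rw [Real.rpow_def_of_pos hn0', ← Real.exp_add, Real.one_le_exp_iff, mul_neg, mul_one_div]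
    linarith
  calc _ ≤ ∑ n ∈ Finset.Ioc 0 ⌊X⌋₊, Real.exp 1 * (g n * (n : ℝ) ^ (-(1 + 1 / Real.log X))) :=
        Finset.sum_le_sum hterm
    _ ≤ _ := by
      rw [← Finset.mul_sum]
      gcongr
      exact hsum.sum_le_tsum _ fun n _ => mul_nonneg (hg0 n) (by positivity)

theorem log_mul_sum_le_mul_tsum (hg : g.IsMultiplicative) (hg0 : ∀ n, 0 ≤ g n)
    (hpow : ∀ p e : ℕ, p.Prime → g (p ^ e) ≤ e + 1) {X : ℝ} (hX : 1 < X)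
    (hsum : Summable fun n : ℕ => g n * (n : ℝ) ^ (-(1 + 1 / Real.log X))) :
    Real.log X * ∑ n ∈ Finset.Ioc 0 ⌊X⌋₊, g n ≤
      3461 * Real.exp 1 * X * ∑' n : ℕ, g n * (n : ℝ) ^ (-(1 + 1 / Real.log X)) := by
  have hX0 : 0 < X := by linarith
  calc _ ≤ 3461 * X * ∑ n ∈ Finset.Ioc 0 ⌊X⌋₊, g n / n := log_mul_sum_le hg hg0 hpow hX0
    _ ≤ 3461 * X * (Real.exp 1 * ∑' n : ℕ, g n * (n : ℝ) ^ (-(1 + 1 / Real.log X))) := by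
        gcongr
        exact sum_div_le_exp_mul_tsum hg0 hX hsum
    _ = _ := by ring

end HallTenenbaum

/-! ### The mean of the exponential sums -/

section Mean

variable {k : ℤ}

lemma angularCoeff_zero (hk0 : k ≠ 0) : angularCoeff k 0 = 0 := by
  rw [angularCoeff, Finset.sum_eq_zero, zero_div]
  intro u hu
  rw [mem_gaussianCircle, Nat.cast_zero, GaussianInt.norm_eq_zero] at hu
  rw [hu, GaussianInt.toComplex_zero, angularChar, zero_div, zero_zpow k hk0]

/-- The arithmetic function `n ↦ |S(n, k)| / 4`. The value of `angularCoeff k` at `0` vanishes only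
for `k ≠ 0`. -/
noncomputable def absAngularCoeff (hk0 : k ≠ 0) : ArithmeticFunction ℝ where
  toFun n := ‖angularCoeff k n‖
  map_zero' := by rw [angularCoeff_zero hk0, norm_zero]

lemma absAngularCoeff_apply (hk0 : k ≠ 0) (n : ℕ) : absAngularCoeff hk0 n = ‖angularCoeff k n‖ :=
  rfl

lemma isMultiplicative_absAngularCoeff (hk0 : k ≠ 0) (hk : 4 ∣ k) :
    (absAngularCoeff hk0).IsMultiplicative := by
  refine ⟨?_, fun hmn => ?_⟩
  · rw [absAngularCoeff_apply, angularCoeff_one hk, norm_one]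
  · simp only [absAngularCoeff_apply, angularCoeff_mul hk hmn, norm_mul]

lemma sum_norm_latticeS (k : ℤ) (N : ℕ) :
    ∑ m ∈ Finset.Icc 1 N, ‖latticeS m k‖ = 4 * ∑ m ∈ Finset.Ioc 0 N, ‖angularCoeff k m‖ := by
  rw [← Finset.Icc_add_one_left_eq_Ioc, zero_add, Finset.mul_sum]
  refine Finset.sum_congr rfl fun m hm => ?_
  have hm0 : m ≠ 0 := Nat.one_le_iff_ne_zero.mp (Finset.mem_Icc.mp hm).1
  rw [latticeS_eq_four_mul_angularCoeff hm0, norm_mul, RCLike.norm_ofNat]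

lemma log_mul_sum_norm_latticeS_le (hk0 : k ≠ 0) (hk : 4 ∣ k) {X : ℝ} (hX : 1 < X) :
    Real.log X * ∑ m ∈ Finset.Icc 1 ⌊X⌋₊, ‖latticeS m k‖ ≤ 4 * (3461 * Real.exp 1 * X *
      ∑' n : ℕ, ‖angularCoeff k n‖ * (n : ℝ) ^ (-(1 + 1 / Real.log X))) := by
  have hσ : 1 < 1 + 1 / Real.log X :=
    lt_add_of_pos_right 1 (one_div_pos.mpr (Real.log_pos hX))
  have hsum := log_mul_sum_le_mul_tsum (isMultiplicative_absAngularCoeff hk0 hk)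
    (fun n => norm_nonneg (angularCoeff k n))
    (fun p e hp => norm_angularCoeff_prime_pow_le ⟨p, hp⟩ k e) hX (summable_norm_angularCoeff k hσ)
  simp only [absAngularCoeff_apply] at hsum
  rw [sum_norm_latticeS, mul_left_comm]
  gcongr

/-- The hypothesis on `k` places `σ = 1 + 1 / log X` in the range of the Dirichlet series bound. -/
lemma one_div_le_div_sq_of_le_sqrt_mul_sqrt {a l L : ℝ} (ha : 0 ≤ a) (hl : 0 < l) (hL : 0 < L)
    (h : l ≤ √a * √L) : 1 / L ≤ a / l ^ 2 := by
  rw [div_le_div_iff₀ hL (by positivity), one_mul]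
  rw [← Real.sqrt_mul ha] at h
  exact (Real.le_sqrt' hl).mp h

end Mean

end LatticePoint

/-- Lattice points on circles are equidistributed on average: for `4 ∣ k`, `k ≠ 0`,
the mean of `|S(m,k)|` over `m ≤ X` is at most `C ((log |k|)² / log X)^(1 - 2/π)`,
provided `log |k| ≤ b √(log X)`. -/
theorem mean_absS_bound :
    ∃ C > (0 : ℝ), ∃ b > (0 : ℝ), ∃ X₀ : ℝ, ∀ k : ℤ, k ≠ 0 → 4 ∣ k →
      ∀ X : ℝ, X₀ ≤ X → Real.log |(k : ℝ)| ≤ b * Real.sqrt (Real.log X) →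
        (1 / X) * ∑ m ∈ Finset.Icc 1 ⌊X⌋₊, ‖latticeS m k‖ ≤
          C * ((Real.log |(k : ℝ)|) ^ 2 / Real.log X) ^ (1 - 2 / Real.pi) := by
  obtain ⟨C, a, hC, ha, hbound⟩ := LatticePoint.exists_tsum_norm_angularCoeff_le
  refine ⟨4 * (3461 * Real.exp 1 * C), by positivity, √a, Real.sqrt_pos.mpr ha, 2,
    fun k hk0 hk X hX hkX => ?_⟩
  have hX0 : 0 < X := by linarith
  have hlogX : 0 < Real.log X := Real.log_pos (by linarith)
  have hlogk : 0 < Real.log |(k : ℝ)| := zero_lt_one.trans_le (LatticePoint.one_le_log_abs hk0 hk)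
  have hmean := LatticePoint.log_mul_sum_norm_latticeS_le hk0 hk (by linarith : 1 < X)
  have hseries := hbound k hk0 hk (1 + 1 / Real.log X) (lt_add_of_pos_right 1 (by positivity))
    (add_le_add le_rfl
      (LatticePoint.one_div_le_div_sq_of_le_sqrt_mul_sqrt ha.le hlogk hlogX hkX))
  rw [add_sub_cancel_left, one_div_mul_eq_div] at hseries
  refine le_of_mul_le_mul_left ?_ (mul_pos hlogX hX0)
  calc _ = Real.log X * ∑ m ∈ Finset.Icc 1 ⌊X⌋₊, ‖latticeS m k‖ := by field_simp
    _ ≤ 4 * (3461 * Real.exp 1 * X * (C / (1 / Real.log X) *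
          (Real.log |(k : ℝ)| ^ 2 / Real.log X) ^ (1 - 2 / Real.pi))) :=
        hmean.trans (by gcongr)
    _ = _ := by field_simp
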